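/- arXiv:2504.04885 — 2 statements merged into one kernel-verified Lean document; each statement's English description precedes it below -/
import Mathlib

section
/- For every a ∈ ℕ^{d+1}, on 𝒯_0 one has the commutation relation gray↷_a ∘ M_loc = M_loc ∘ ( Σ_{k∈ℕ^{d+1}} (1/k!) gray↷_{a−k,k} ), where terms with a−k ∉ ℕ^{d+1} are set to zero and both sides take values in the space of (possibly infinite) formal linear combinations of decorated trees. -/
noncomputable section
open scoped BigOperators
attribute [local instance] Classical.propDecidable

namespace Flow

/-- Multi-indices in `ℕ^{d+1}`. -/
abbrev Multi (d : ℕ) := Fin (d + 1) → ℕ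

/-- `k! = ∏ᵢ (kᵢ)!`. -/
def mfact {d : ℕ} (k : Multi d) : ℕ := ∏ i, (k i).factorial

/-- multinomial binomial coefficient `binom(k,j) = ∏ᵢ binom(kᵢ,jᵢ)`. -/
def mbinom {d : ℕ} (k j : Multi d) : ℕ := ∏ i, (k i).choose (j i)

/-- `|k|_𝔰` for the parabolic scaling `𝔰 = (λ,1,…,1)`. -/
def sNorm {d : ℕ} (lam : ℝ) (k : Multi d) : ℝ :=
  lam * (k 0 : ℝ) + ∑ i, (if i = (0 : Fin (d + 1)) then 0 else (k i : ℝ))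

/-- Planar representatives of decorated rooted trees.  A node carries:
`noise` (the presence of a noise-type edge `Ξ` at this node, i.e. the symbol `ζ_l`),
`grayNoise` (a grey noise symbol `grayΞ`), a polynomial decoration `X^k`, a marker `Y^𝔳`,
and a list of branches.  A branch is either `Sum.inl ((isPrime, a), t)`,
an integration edge `ℐ_a` (`isPrime = false`) or `ℐ'_a` (`isPrime = true`) with subtree `t`,
or `Sum.inr (a, k)`, a grey integration leaf `grayℐ_a(X^k)`. -/
inductive Tree (d : ℕ) : Type where
  | node (noise grayNoise : Bool) (k : Multi d) (v : Bool)
      (bs : List (((Bool × Multi d) × Tree d) ⊕ (Multi d × Multi d)))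

abbrev Branch (d : ℕ) := ((Bool × Multi d) × Tree d) ⊕ (Multi d × Multi d)

namespace Tree

variable {d : ℕ}

def intB (a : Multi d) (t : Tree d) : Branch d := Sum.inl ((false, a), t)
def intPB (a : Multi d) (t : Tree d) : Branch d := Sum.inl ((true, a), t)
def grayB (a k : Multi d) : Branch d := Sum.inr (a, k)

def atom (l g : Bool) (k : Multi d) (v : Bool) : Tree d := .node l g k v []
/-- `𝟏·Y^𝔳`. -/
def one (v : Bool) : Tree d := atom false false 0 v
/-- `Ξ·Y^𝔳`. -/
def xi (v : Bool) : Tree d := atom true false 0 v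
/-- `X^k`. -/
def poly (k : Multi d) : Tree d := atom false false k false
/-- the planted tree `ℐ_a(t)`. -/
def plantI (a : Multi d) (t : Tree d) : Tree d := .node false false 0 false [intB a t]
/-- the planted tree `ℐ'_a(t)`. -/
def plantIP (a : Multi d) (t : Tree d) : Tree d := .node false false 0 false [intPB a t]
/-- the planted grey tree `grayℐ_a(X^k)`. -/
def plantG (a k : Multi d) : Tree d := .node false false 0 false [grayB a k]

/-- Tree product: identification of the roots, adding the decorations. -/
def mul : Tree d → Tree d → Tree d
  | .node l g k v bs, .node l' g' k' v' bs' =>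
      .node (l || l') (g || g') (k + k') (v || v') (bs ++ bs')

/-- `ζ_l Y^𝔳 ∏ᵢ ℐ_{aᵢ}(τᵢ)`. -/
def mk0 (l : Bool) (v : Bool) (bs : List (Multi d × Tree d)) : Tree d :=
  .node l false 0 v (bs.map fun p => intB p.1 p.2)

/-- `ζ_l X^k Y^𝔳 ∏ᵢ ℐ_{aᵢ}(τᵢ)`. -/
def mkX (l : Bool) (k : Multi d) (v : Bool) (bs : List (Multi d × Tree d)) : Tree d :=
  .node l false k v (bs.map fun p => intB p.1 p.2)

end Tree

namespace Tree
variable {d : ℕ}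

/-- Lift of a relation on trees to branches: equality of edge labels plus the
relation on subtrees. -/
def BRel (r : Tree d → Tree d → Prop) : Branch d → Branch d → Prop
  | Sum.inl ((p, a), t), Sum.inl ((p', a'), t') => p = p' ∧ a = a' ∧ r t t'
  | Sum.inr x, Sum.inr y => x = y
  | _, _ => False

/-- Fuelled version of non-planar equality of decorated trees. -/
def TEquivN : ℕ → Tree d → Tree d → Prop
  | 0, _, _ => False
  | n + 1, .node l g k v bs, .node l' g' k' v' bs' =>
      l = l' ∧ g = g' ∧ k = k' ∧ v = v' ∧
        ∃ e : Fin bs.length ≃ Fin bs'.length,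
          ∀ i : Fin bs.length, BRel (TEquivN n) (bs.get i) (bs'.get (e i))

/-- Two planar trees represent the same non-planar decorated tree. -/
def TEquiv (t t' : Tree d) : Prop := ∃ n, TEquivN n t t'

end Tree

/-- Non-planar decorated trees. -/
abbrev QTree (d : ℕ) := Quot (@Tree.TEquiv d)

/-- The class of a planar representative. -/
def qk {d : ℕ} (t : Tree d) : QTree d := Quot.mk _ t

/-- A choice of planar representative. -/
def qout {d : ℕ} (c : QTree d) : Tree d := (Quot.exists_rep c).choose

namespace Tree

variable {d : ℕ}

/-- Fuelled symmetry factor. -/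
def SfacN : ℕ → Tree d → ℕ
  | 0, _ => 1
  | n + 1, .node _ _ k _ bs =>
      mfact k *
        Nat.card {e : Equiv.Perm (Fin bs.length) //
          ∀ i, BRel TEquiv (bs.get (e i)) (bs.get i)} *
        (bs.map fun b => match b with
          | Sum.inl (_, t) => SfacN n t
          | Sum.inr _ => 1).prod

/-- The symmetry factor `S(τ)`. -/
def Sfac (t : Tree d) : ℕ := SfacN (sizeOf t) t

/-- Fuelled degree. -/
def degN (α lam : ℝ) : ℕ → Tree d → ℝ
  | 0, _ => 0
  | n + 1, .node l _ k _ bs =>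
      (if l then α else 0) + sNorm lam k +
        (bs.map fun b => match b with
          | Sum.inl ((p, a), t) => degN α lam n t + (if p then 0 else lam) - sNorm lam a
          | Sum.inr _ => 0).sum

/-- The degree of a decorated tree (`α` is the regularity of the noise,
`lam` the order `λ` of the operator). -/
def deg (α lam : ℝ) (t : Tree d) : ℝ := degN α lam (sizeOf t) t

/-- Fuelled number of `ℐ'`-edges. -/
def primeCountN : ℕ → Tree d → ℕ
  | 0, _ => 0
  | n + 1, .node _ _ _ _ bs =>
      (bs.map fun b => match b with
        | Sum.inl ((p, _), t) => (if p then 1 else 0) + primeCountN n t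
        | Sum.inr _ => 0).sum

def primeCount (t : Tree d) : ℕ := primeCountN (sizeOf t) t

/-- Fuelled shape predicate; the flags allow polynomial decorations, grey
decorations and `ℐ'`-edges respectively. -/
def ShapeN (aP aG aPr : Bool) : ℕ → Tree d → Prop
  | 0, _ => False
  | n + 1, .node _ g k _ bs =>
      (aG = true ∨ g = false) ∧ (aP = true ∨ k = 0) ∧
        ∀ b ∈ bs,
          (∃ p a t, b = Sum.inl ((p, a), t) ∧ (aPr = true ∨ p = false) ∧
              ShapeN aP aG aPr n t) ∨
            (aG = true ∧ ∃ x, b = Sum.inr x)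

def Shape (aP aG aPr : Bool) (t : Tree d) : Prop := ∃ n, ShapeN aP aG aPr n t

/-- `T_0`: only `ℐ`- and `Ξ`-edges, trivial polynomial decorations. -/
def IsT0 (t : Tree d) : Prop := Shape false false false t
/-- `T_0^X`: polynomial decorations allowed. -/
def IsT0X (t : Tree d) : Prop := Shape true false false t
/-- `T_0^𝔤`: grey decorations allowed. -/
def IsT0g (t : Tree d) : Prop := Shape false true false t
/-- `T_0^{X,𝔤}`. -/
def IsT0Xg (t : Tree d) : Prop := Shape true true false t
/-- `T_1`: at most one `ℐ'`-edge. -/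
def IsT1 (t : Tree d) : Prop := Shape false false true t ∧ primeCount t ≤ 1
/-- `T_1^X`. -/
def IsT1X (t : Tree d) : Prop := Shape true false true t ∧ primeCount t ≤ 1

/-- Fuelled predicate: every node carries the marker `Y^{v₀}`. -/
def VAllN (v0 : Bool) : ℕ → Tree d → Prop
  | 0, _ => False
  | n + 1, .node _ _ _ v bs =>
      v = v0 ∧ ∀ b ∈ bs, ∀ pa t, b = Sum.inl (pa, t) → VAllN v0 n t

def VAll (v0 : Bool) (t : Tree d) : Prop := ∃ n, VAllN v0 n t

/-- Fuelled predicate: all edge decorations are `0`. -/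
def Dec0N : ℕ → Tree d → Prop
  | 0, _ => False
  | n + 1, .node _ _ _ _ bs =>
      ∀ b ∈ bs, ∀ pa t, b = Sum.inl (pa, t) → (pa.2 = (0 : Multi d) ∧ Dec0N n t)

def Dec0 (t : Tree d) : Prop := ∃ n, Dec0N n t

/-- Fuelled predicate: the tree contains a grey symbol. -/
def hasGrayN : ℕ → Tree d → Prop
  | 0, _ => False
  | n + 1, .node _ g _ _ bs =>
      g = true ∨ ∃ b ∈ bs,
        (∃ x, b = Sum.inr x) ∨ (∃ pa t, b = Sum.inl (pa, t) ∧ hasGrayN n t)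

def HasGray (t : Tree d) : Prop := ∃ n, hasGrayN n t

/-- Fuelled inverse of the grey decorations (`graydown`): erase `grayΞ`,
transfer the polynomial of each grey edge to the node decoration. -/
def graydownN : ℕ → Tree d → Tree d
  | 0, t => t
  | n + 1, .node l _ k v bs =>
      .node l false
        (k + (bs.map fun b => match b with
          | Sum.inr (_, kk) => kk
          | _ => 0).sum) v
        (bs.filterMap fun b => match b with
          | Sum.inl ((p, a), t) => some (Sum.inl ((p, a), graydownN n t))
          | Sum.inr _ => none)

def graydown (t : Tree d) : Tree d := graydownN (sizeOf t) t

end Tree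

/-! ### Formal linear combinations of decorated trees -/

/-- A (possibly infinite) formal linear combination of non-planar decorated trees. -/
abbrev Ser (d : ℕ) := QTree d → ℝ

/-- A formal linear combination of tensor products of decorated trees. -/
abbrev Ser2 (d : ℕ) := QTree d × QTree d → ℝ

/-- The basis element given by a planar tree. -/
def dqT {d : ℕ} (t : Tree d) : Ser d := fun x => if x = qk t then 1 else 0

/-- The basis element given by a class. -/
def dqC {d : ℕ} (c : QTree d) : Ser d := fun x => if x = c then 1 else 0

/-- The basis element `s ⊗ t`. -/
def dq2 {d : ℕ} (s t : Tree d) : Ser2 d := fun x => if x = (qk s, qk t) then 1 else 0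

/-- Linear extension of a tree-indexed family of series to series. -/
def extT {d : ℕ} (F : QTree d → Ser d) (S : Ser d) : Ser d :=
  fun x => ∑ᶠ c : QTree d, S c * F c x

/-- Linear extension, with values in tensors. -/
def extS2 {d : ℕ} (F : QTree d → Ser2 d) (S : Ser d) : Ser2 d :=
  fun x => ∑ᶠ c : QTree d, S c * F c x

/-- Apply linear maps in each tensor slot. -/
def ap2 {d : ℕ} (F G : QTree d → Ser d) (S : Ser2 d) : Ser2 d :=
  fun x => ∑ᶠ p : QTree d × QTree d, S p * F p.1 x.1 * G p.2 x.2

/-- `(id ⊗ f)` for a map `f` on planar trees. -/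
def mapSnd {d : ℕ} (f : Tree d → Tree d) (S : Ser2 d) : Ser2 d :=
  fun x => ∑ᶠ p : QTree d × QTree d,
    S p * (if x.1 = p.1 ∧ x.2 = qk (f (qout p.2)) then 1 else 0)

/-- `(f ⊗ id)` for a map `f` on planar trees. -/
def mapFst {d : ℕ} (f : Tree d → Tree d) (S : Ser2 d) : Ser2 d :=
  fun x => ∑ᶠ p : QTree d × QTree d,
    S p * (if x.2 = p.2 ∧ x.1 = qk (f (qout p.1)) then 1 else 0)

/-- `(f ⊗ id)` killing the trees containing grey symbols (the convention
`ℐ_a(τ) = 0` for `τ` containing a grey symbol). -/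
def mapFstKill {d : ℕ} (f : Tree d → Tree d) (S : Ser2 d) : Ser2 d :=
  fun x => ∑ᶠ p : QTree d × QTree d,
    S p * (if ¬ Tree.HasGray (qout p.1) ∧ x.2 = p.2 ∧ x.1 = qk (f (qout p.1)) then 1 else 0)

/-- Product of series (bilinear extension of the tree product). -/
def mulS {d : ℕ} (A B : Ser d) : Ser d :=
  fun x => ∑ᶠ p : QTree d × QTree d,
    A p.1 * B p.2 * (if x = qk (Tree.mul (qout p.1) (qout p.2)) then 1 else 0)

/-- Product of tensor series. -/
def mul2 {d : ℕ} (A B : Ser2 d) : Ser2 d :=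
  fun x => ∑ᶠ p : (QTree d × QTree d) × (QTree d × QTree d),
    A p.1 * B p.2 *
      (if x.1 = qk (Tree.mul (qout p.1.1) (qout p.2.1)) ∧
          x.2 = qk (Tree.mul (qout p.1.2) (qout p.2.2)) then 1 else 0)

/-- A branch specification: a concrete grey leaf, or an edge whose subtree is a series. -/
inductive BSpec (d : ℕ) where
  | ser (isP : Bool) (a : Multi d) (S : Ser d)
  | gray (a k : Multi d)

def BSpec.coeff {d : ℕ} : BSpec d → QTree d → ℝ
  | .ser _ _ S, c => S c
  | .gray _ _, c => if c = qk (Tree.one false) then 1 else 0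

def BSpec.toBranch {d : ℕ} : BSpec d → QTree d → Branch d
  | .ser p a _, c => Sum.inl ((p, a), qout c)
  | .gray a k, _ => Tree.grayB a k

/-- The tree `node(l,g,k,v; branches)` where the subtree of each (non-grey)
branch is drawn from a series; this is the multilinear extension of the
node-building operation to series. -/
def nodeSer {d : ℕ} (l g : Bool) (k : Multi d) (v : Bool) (specs : List (BSpec d)) : Ser d :=
  fun x => ∑ᶠ cs : List (QTree d),
    if cs.length = specs.length then
      (List.zipWith BSpec.coeff specs cs).prod *
        dqT (Tree.node l g k v (List.zipWith BSpec.toBranch specs cs)) x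
    else 0

/-- Branch specifications of a list of (decoration, subtree) pairs. -/
def specsOf {d : ℕ} (bs : List (Multi d × Tree d)) : List (BSpec d) :=
  bs.map fun p => BSpec.ser false p.1 (dqT p.2)

/-- Branch specifications of a list of branches. -/
def specsOfB {d : ℕ} (bs : List (Branch d)) : List (BSpec d) :=
  bs.map fun b => match b with
    | Sum.inl ((p, a), t) => BSpec.ser p a (dqT t)
    | Sum.inr ak => BSpec.gray ak.1 ak.2

/-- The symmetry-factor pairing `⟨σ,τ⟩ = S(τ) 𝟙_{σ=τ}`, extended bilinearly. -/
def pairS {d : ℕ} (A B : Ser d) : ℝ :=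
  ∑ᶠ c : QTree d, A c * B c * (Tree.Sfac (qout c) : ℝ)

/-- The pairing on tensors, `⟨σ₁⊗σ₂, τ₁⊗τ₂⟩ = ⟨σ₁,τ₁⟩⟨σ₂,τ₂⟩`. -/
def pair2 {d : ℕ} (A B : Ser2 d) : ℝ :=
  ∑ᶠ p : QTree d × QTree d,
    A p * B p * (Tree.Sfac (qout p.1) : ℝ) * (Tree.Sfac (qout p.2) : ℝ)

/-- Symmetry factor of a class. -/
def SQ {d : ℕ} (c : QTree d) : ℕ := Tree.Sfac (qout c)

/-- Degree of a class. -/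
def degQ {d : ℕ} (α lam : ℝ) (c : QTree d) : ℝ := Tree.deg α lam (qout c)

def IsT0Q {d : ℕ} (c : QTree d) : Prop := ∃ t, qk t = c ∧ Tree.IsT0 t
/-- classes of trees in `T_0^*` (marker `𝔳 = 1` everywhere). -/
def IsT0starQ {d : ℕ} (c : QTree d) : Prop := ∃ t, qk t = c ∧ Tree.IsT0 t ∧ Tree.VAll true t
/-- classes of trees in `T_0^{X,*}`. -/
def IsT0XstarQ {d : ℕ} (c : QTree d) : Prop := ∃ t, qk t = c ∧ Tree.IsT0X t ∧ Tree.VAll true t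


/-! ### Defining equations of the maps on decorated trees -/

/-- Defining recursion of the localisation map `M_loc`:
`M_loc (ζ_l Y^𝔳 ∏ᵢ ℐ_{aᵢ}(τᵢ) ∏ⱼ grayℐ_{bⱼ}(X^{kⱼ}))
  = Σ_k (X^k/k!) ζ_l Y^𝔳 ∏ᵢ ℐ_{aᵢ}(M_loc τᵢ) ∏ⱼ grayℐ_{bⱼ}(X^{kⱼ})`. -/
def MlocEqs {d : ℕ} (Mloc : QTree d → Ser d) : Prop :=
  ∀ (l g : Bool) (v : Bool) (bs : List (Branch d)),
    Tree.IsT0g (Tree.node l g 0 v bs) →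
    Mloc (qk (Tree.node l g 0 v bs)) = fun x =>
      ∑ᶠ k : Multi d, (1 / (mfact k : ℝ)) *
        nodeSer l g k v (bs.map fun b => match b with
          | Sum.inl ((p, a), t) => BSpec.ser p a (Mloc (qk t))
          | Sum.inr ak => BSpec.gray ak.1 ak.2) x

/-- Defining recursion of the abstract derivative `↑_μ`:
it vanishes on trees with no edge and
`↑_μ (ζ_l Y^𝔳 ∏ᵢ ℐ_{aᵢ}(τᵢ)) = ζ_l Y^𝔳 Σᵢ (ℐ'_{aᵢ}(τᵢ) + ℐ_{aᵢ}(↑_μ τᵢ)) ∏_{j≠i} ℐ_{aⱼ}(τⱼ)`. -/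
def UpEqs {d : ℕ} (up : QTree d → Ser d) : Prop :=
  ∀ (l : Bool) (v : Bool) (bs : List (Multi d × Tree d)), (∀ p ∈ bs, Tree.IsT0 p.2) →
    up (qk (Tree.mk0 l v bs)) =
      (∑ i : Fin bs.length,
        dqT (Tree.node l false 0 v
          ((bs.map fun p => Tree.intB p.1 p.2).set i.1
            (Tree.intPB (bs.get i).1 (bs.get i).2)))) +
      ∑ i : Fin bs.length,
        nodeSer l false 0 v
          ((specsOf bs).set i.1 (BSpec.ser false (bs.get i).1 (up (qk (bs.get i).2))))

/-- Defining recursion of the grafting operator `↷_a` (grafting with an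
`ℐ'_a`-edge on the nodes with marker `𝔳 = 1`; grafting at the root switches the
marker of the root to `0`). -/
def GraftEqs {d : ℕ} (graft : Multi d → QTree d → QTree d → Ser d) : Prop :=
  ∀ (a : Multi d) (σ : Tree d), Tree.IsT0 σ →
    ∀ (l : Bool) (bs : List (Multi d × Tree d)), (∀ p ∈ bs, Tree.IsT0 p.2) →
      (graft a (qk σ) (qk (Tree.mk0 l true bs)) =
        dqT (Tree.node l false 0 false
          (Tree.intPB a σ :: bs.map fun p => Tree.intB p.1 p.2)) +
        ∑ i : Fin bs.length,
          nodeSer l false 0 true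
            ((specsOf bs).set i.1
              (BSpec.ser false (bs.get i).1 (graft a (qk σ) (qk (bs.get i).2))))) ∧
      (graft a (qk σ) (qk (Tree.mk0 l false bs)) =
        ∑ i : Fin bs.length,
          nodeSer l false 0 false
            ((specsOf bs).set i.1
              (BSpec.ser false (bs.get i).1 (graft a (qk σ) (qk (bs.get i).2)))))

/-- Defining equations of the grafting at the root only, `↷_a^{root}`. -/
def GraftRootEqs {d : ℕ} (graftR : Multi d → QTree d → QTree d → Ser d) : Prop :=
  ∀ (a : Multi d) (σ : Tree d) (l : Bool) (v : Bool) (bs : List (Multi d × Tree d)),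
    graftR a (qk σ) (qk (Tree.mk0 l v bs)) =
      if v then
        dqT (Tree.node l false 0 false
          (Tree.intPB a σ :: bs.map fun p => Tree.intB p.1 p.2))
      else 0

/-- Defining recursion of the grey grafting `gray↷_a` on `𝒯_0^X`. -/
def GAEqs {d : ℕ} (GA : Multi d → QTree d → Ser d) : Prop :=
  ∀ (a : Multi d) (l : Bool) (k : Multi d) (v : Bool) (bs : List (Multi d × Tree d)),
    (∀ p ∈ bs, Tree.IsT0X p.2) →
    GA a (qk (Tree.mkX l k v bs)) =
      (fun x => (if v = true then (1 : ℝ) else 0) *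
        ∑ᶠ j : Multi d, if j ≤ a then
          (mbinom k j : ℝ) *
            dqT (Tree.node l false (k - j) v
              (Tree.grayB (a - j) j :: bs.map fun p => Tree.intB p.1 p.2)) x
        else 0) +
      ∑ i : Fin bs.length,
        nodeSer l false k v
          ((specsOf bs).set i.1 (BSpec.ser false (bs.get i).1 (GA a (qk (bs.get i).2))))

/-- Defining recursion of the grey grafting `gray↷_{a,k}` on `𝒯_0^𝔤`. -/
def GAKEqs {d : ℕ} (GAK : Multi d → Multi d → QTree d → Ser d) : Prop :=
  ∀ (a k0 : Multi d) (l g : Bool) (v : Bool) (bs : List (Branch d)),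
    Tree.IsT0g (Tree.node l g 0 v bs) →
    GAK a k0 (qk (Tree.node l g 0 v bs)) =
      (fun x => (if v = true then (1 : ℝ) else 0) *
        dqT (Tree.node l g 0 v (Tree.grayB a k0 :: bs)) x) +
      ∑ i : Fin bs.length,
        (match bs.get i with
          | Sum.inl ((false, ai), ti) =>
              nodeSer l g 0 v ((specsOfB bs).set i.1
                (BSpec.ser false ai (GAK a k0 (qk ti))))
          | _ => 0)

/-- Defining recursion of the coproduct `Δ_a`, dual to `↷_a`. -/
def DaEqs {d : ℕ} (Da : Multi d → QTree d → Ser2 d) : Prop :=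
  ∀ a : Multi d,
    (Da a (qk (Tree.one false)) = dq2 (Tree.one false) (Tree.one false)) ∧
    (Da a (qk (Tree.xi false)) = dq2 (Tree.xi false) (Tree.one true)) ∧
    (∀ (b : Multi d) (t : Tree d), Tree.IsT0 t →
      Da a (qk (Tree.plantIP b t)) =
        mapSnd (Tree.plantI b) (Da a (qk t)) +
          (if a = b then dq2 t (Tree.one true) else 0)) ∧
    (∀ (b : Multi d) (t : Tree d), Tree.IsT0 t →
      Da a (qk (Tree.plantI b t)) = mapSnd (Tree.plantI b) (Da a (qk t))) ∧
    (∀ s t : Tree d, Tree.IsT1 s → Tree.IsT1 t → Tree.VAll false s → Tree.VAll false t →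
      Da a (qk (Tree.mul s t)) =
        mul2 (Da a (qk s)) (dq2 (Tree.one false) t) +
          mul2 (dq2 (Tree.one false) s) (Da a (qk t)))

/-- Defining recursion of the elementary-cuts coproduct `Δ_1`. -/
def D1Eqs {d : ℕ} (D1 : QTree d → Ser2 d) : Prop :=
  (D1 (qk (Tree.one false)) = dq2 (Tree.one false) (Tree.one false)) ∧
  (D1 (qk (Tree.xi false)) = dq2 (Tree.xi false) (Tree.one true)) ∧
  (∀ (a : Multi d) (t : Tree d), Tree.IsT0 t →
    D1 (qk (Tree.plantI a t)) =
      mapSnd (Tree.plantI a) (D1 (qk t)) + dq2 (Tree.plantIP a t) (Tree.one true)) ∧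
  (∀ s t : Tree d, Tree.IsT0 s → Tree.IsT0 t → Tree.VAll false s → Tree.VAll false t →
    D1 (qk (Tree.mul s t)) =
      mul2 (D1 (qk s)) (dq2 (Tree.one false) t) +
        mul2 (dq2 (Tree.one false) s) (D1 (qk t)))

/-- Defining recursion of the extraction-at-the-root coproduct `Δ_r`. -/
def DrEqs {d : ℕ} (Dr : QTree d → Ser2 d) : Prop :=
  (∀ v : Bool, Dr (qk (Tree.one v)) = dq2 (Tree.one v) (Tree.one false)) ∧
  (Dr (qk (Tree.xi false)) =
    dq2 (Tree.atom false true 0 false) (Tree.xi false) + dq2 (Tree.xi false) (Tree.one false)) ∧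
  (∀ i : Fin (d + 1),
    Dr (qk (Tree.poly (Pi.single i 1))) =
      dq2 (Tree.one false) (Tree.poly (Pi.single i 1)) +
        dq2 (Tree.poly (Pi.single i 1)) (Tree.one false)) ∧
  (∀ (a : Multi d) (t : Tree d), Tree.IsT0X t →
    Dr (qk (Tree.plantI a t)) =
      mapFstKill (Tree.plantI a) (Dr (qk t)) +
        fun x => ∑ᶠ k : Multi d,
          (1 / (mfact k : ℝ)) * dq2 (Tree.plantG a k) (Tree.plantI (a + k) t) x) ∧
  (∀ (a : Multi d) (t : Tree d), Tree.IsT0X t →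
    Dr (qk (Tree.plantIP a t)) = fun x =>
      ∑ᶠ k : Multi d,
        (1 / (mfact k : ℝ)) * dq2 (Tree.plantG a k) (Tree.plantIP (a + k) t) x) ∧
  (∀ s t : Tree d, Tree.IsT1X s → Tree.IsT1X t →
    Dr (qk (Tree.mul s t)) = mul2 (Dr (qk s)) (Dr (qk t)))

/-- Defining recursion of the map `⇑` (summing over all edge decorations). -/
def Up2Eqs {d : ℕ} (Up2 : QTree d → Ser d) : Prop :=
  (∀ (l : Bool) (v : Bool), Up2 (qk (Tree.atom l false 0 v)) = dqT (Tree.atom l false 0 v)) ∧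
  (∀ t : Tree d, Tree.IsT1 t → Tree.Dec0 t →
    (Up2 (qk (Tree.plantI 0 t)) = fun x =>
      ∑ᶠ a : Multi d, nodeSer false false 0 false [BSpec.ser false a (Up2 (qk t))] x) ∧
    (Up2 (qk (Tree.plantIP 0 t)) = fun x =>
      ∑ᶠ a : Multi d, nodeSer false false 0 false [BSpec.ser true a (Up2 (qk t))] x)) ∧
  (∀ s t : Tree d, Tree.IsT1 s → Tree.IsT1 t → Tree.Dec0 s → Tree.Dec0 t →
    Up2 (qk (Tree.mul s t)) = mulS (Up2 (qk s)) (Up2 (qk t)))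


namespace Tree
variable {d : ℕ}

/-- Fuelled list of the planar trees `↑_μ^e τ`, for `e` ranging over the
`ℐ`-edges of `τ`: the type of the edge `e` is switched from `ℐ` to `ℐ'`. -/
def switchesN : ℕ → Tree d → List (Tree d)
  | 0, _ => []
  | n + 1, .node l g k v bs =>
      (List.finRange bs.length).flatMap fun i =>
        match bs.get i with
        | Sum.inl ((false, a), t) =>
            Tree.node l g k v (bs.set i.1 (intPB a t)) ::
              (switchesN n t).map fun t' => Tree.node l g k v (bs.set i.1 (intB a t'))
        | _ => []

/-- The list of the planar trees `↑_μ^e τ`, `e ∈ E_τ` an `ℐ`-edge of `τ`. -/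
def switches (t : Tree d) : List (Tree d) := switchesN (sizeOf t) t

end Tree

/-- The insertion product `ℐ'_a(σ) ↷ τ = σ ↷_a τ` (vanishing on anything that
is not a planted tree `ℐ'_a(σ)`), as a pairing of the two components of a tensor. -/
def insApply {d : ℕ} (graft : Multi d → QTree d → QTree d → Ser d)
    (c₁ c₂ : QTree d) : Ser d :=
  match qout c₁ with
  | .node false false k false [Sum.inl ((true, a), σ)] =>
      if k = 0 then graft a (qk σ) c₂ else 0
  | _ => 0

/-- The insertion product applied to a tensor series. -/
def insProd {d : ℕ} (graft : Multi d → QTree d → QTree d → Ser d)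
    (S : Ser2 d) : Ser d :=
  fun x => ∑ᶠ p : QTree d × QTree d, S p * insApply graft p.1 p.2 x

/-- Recognise the class of a planted tree `ℐ_0(σ)` and return the class of `σ`. -/
def strip0 {d : ℕ} (c : QTree d) : Option (QTree d) :=
  match qout c with
  | .node false false k false [Sum.inl ((false, a), σ)] =>
      if k = 0 ∧ a = 0 then some (qk σ) else none
  | _ => none


namespace Tree
variable {d : ℕ}
/-- Decorations of the `ℐ`/`ℐ'`-edges at the root. -/
def intDecs (bs : List (Branch d)) : List (Multi d) :=
  bs.filterMap fun b => match b with
    | Sum.inl ((_, a), _) => some a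
    | Sum.inr _ => none
/-- Decorations of the grey edges at the root. -/
def grayDecs (bs : List (Branch d)) : List (Multi d) :=
  bs.filterMap fun b => match b with
    | Sum.inr (a, _) => some a
    | Sum.inl _ => none
/-- Subtrees of the `ℐ`/`ℐ'`-edges at the root. -/
def intSubs (bs : List (Branch d)) : List (Tree d) :=
  bs.filterMap fun b => match b with
    | Sum.inl (_, t) => some t
    | Sum.inr _ => none
end Tree

end Flow

namespace Flow

/-!
Every node of `M_loc τ` is a multilinear expression in the series carried by its branches, so both
sides of the identity satisfy a recursion along the nodes of `τ`, and the terms that graft above the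
root agree by induction and multilinearity. At the root, `gray↷_a` turns `X^k / k!` into the sum
over `j` of `binom(k, j) X^{k-j} grayℐ_{a-j}(X^j) / k!`; substituting `k + j` for `k` and using
`binom(k + j, j) / (k + j)! = 1 / (j! k!)`, this becomes the sum over `j` of `1 / j!` times the
localisation of the root with the extra leaf `grayℐ_{a-j}(X^j)`.

All the series are infinite, but each coefficient of each composite is a finite sum: a non-planar
tree determines the monomial at its root and, up to finitely many choices, the subtrees attached to
its root. The finiteness is carried along the induction by `HasFinsum` and `HasExt`.
-/

/-- `f` has finite support and sum `s`. Unlike `∑ᶠ i, f i = s`, this excludes the junk value `0`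
of `finsum` on families of infinite support. -/
def HasFinsum {ι M : Type*} [AddCommMonoid M] (f : ι → M) (s : M) : Prop :=
  (Function.support f).Finite ∧ ∑ᶠ i, f i = s

namespace HasFinsum

variable {ι κ M R : Type*}

section AddCommMonoid

variable [AddCommMonoid M] {f g : ι → M} {s t : M}

theorem finsum_eq (h : HasFinsum f s) : ∑ᶠ i, f i = s := h.2

theorem single (i : ι) (h : ∀ j, j ≠ i → f j = 0) : HasFinsum f (f i) :=
  ⟨(Set.finite_singleton i).subset fun j hj => by_contra fun hji => hj (h j hji),
    finsum_eq_single f i h⟩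

theorem of_finset (A : Finset ι) (h : ∀ i ∉ A, f i = 0) : HasFinsum f (∑ i ∈ A, f i) := by
  have hsupp : Function.support f ⊆ A := fun i hi => by_contra fun hiA => hi (h i hiA)
  exact ⟨A.finite_toSet.subset hsupp, finsum_eq_finsetSum_of_support_subset f hsupp⟩

theorem add (hf : HasFinsum f s) (hg : HasFinsum g t) : HasFinsum (fun i => f i + g i) (s + t) :=
  ⟨(hf.1.union hg.1).subset (Function.support_add f g),
    by rw [finsum_add_distrib hf.1 hg.1, hf.2, hg.2]⟩

theorem finsetSum {A : Finset κ} {F : κ → ι → M} {S : κ → M}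
    (h : ∀ j ∈ A, HasFinsum (F j) (S j)) : HasFinsum (fun i => ∑ j ∈ A, F j i) (∑ j ∈ A, S j) := by
  induction A using Finset.induction_on with
  | empty => exact ⟨by simp, by simp⟩
  | insert j A hj ih =>
    simp only [Finset.sum_insert hj]
    exact (h j (Finset.mem_insert_self j A)).add
      (ih fun i hi => h i (Finset.mem_insert_of_mem hi))

theorem of_injective {e : κ → ι} (he : e.Injective) (h0 : ∀ i ∉ Set.range e, f i = 0)
    (h : HasFinsum (f ∘ e) s) : HasFinsum f s := by
  have hsupp : Function.support f ⊆ Set.range e := Function.support_subset_iff'.2 h0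
  constructor
  · have himage : Function.support f = e '' Function.support (f ∘ e) := by
      rw [Function.support_comp_eq_preimage, Set.image_preimage_eq_of_subset hsupp]
    exact himage ▸ h.1.image e
  · rw [← h.2, ← finsum_mem_univ f, ← finsum_mem_inter_support, Set.univ_inter,
      ← Set.inter_eq_right.2 hsupp, finsum_mem_inter_support, finsum_mem_range he]
    rfl

theorem prod_fiberwise {f : ι × κ → M} {g : ι → M} (h : HasFinsum f s)
    (hg : ∀ i, HasFinsum (fun j => f (i, j)) (g i)) : HasFinsum g s := by
  constructor
  · refine (h.1.image Prod.fst).subset fun i hi => ?_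
    obtain ⟨j, hj⟩ : ∃ j, f (i, j) ≠ 0 := by
      by_contra! hzero
      exact hi (by rw [← (hg i).2, finsum_congr hzero, finsum_zero])
    exact ⟨(i, j), hj, rfl⟩
  · rw [← h.2, finsum_curry f h.1]
    exact finsum_congr fun i => (hg i).2.symm

end AddCommMonoid

theorem mul_left [NonUnitalNonAssocSemiring R] {f : ι → R} {s : R} (r : R) (h : HasFinsum f s) :
    HasFinsum (fun i => r * f i) (r * s) :=
  ⟨h.1.subset (Function.support_mul_subset_right (fun _ => r) f), by
    rw [← mul_finsum' f r h.1, h.2]⟩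

section CommSemiring

variable [CommSemiring R]

theorem piProd [Fintype ι] {f : ι → κ → R} {s : ι → R} (h : ∀ i, HasFinsum (f i) (s i)) :
    HasFinsum (fun c : ι → κ => ∏ i, f i (c i)) (∏ i, s i) := by
  let A : ι → Finset κ := fun i => (h i).1.toFinset
  have hsum : ∏ i, s i = ∑ c ∈ Fintype.piFinset A, ∏ i, f i (c i) := by
    rw [← Finset.prod_univ_sum]
    exact Finset.prod_congr rfl fun i _ => by rw [← (h i).2, finsum_eq_sum _ (h i).1]
  rw [hsum]
  refine of_finset _ fun c hc => ?_
  obtain ⟨i, hi⟩ : ∃ i, c i ∉ A i := by simpa [Fintype.mem_piFinset] using hc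
  exact Finset.prod_eq_zero (Finset.mem_univ i) (by simpa [A] using hi)

theorem of_pushforward {w : κ → R} {N : κ → ι} {S G : ι → R} {t : R}
    (hS : ∀ i, HasFinsum (fun p => w p * if i = N p then 1 else 0) (S i))
    (h : HasFinsum (fun p => w p * G (N p)) t) : HasFinsum (fun i => S i * G i) t := by
  have hgraph : HasFinsum (fun q : ι × κ => G q.1 * (w q.2 * if q.1 = N q.2 then 1 else 0)) t := by
    refine of_injective (e := fun p => (N p, p)) (fun p q hpq => (Prod.ext_iff.1 hpq).2) ?_ ?_
    · rintro ⟨i, p⟩ hip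
      have hne : i ≠ N p := fun hi => hip ⟨p, Prod.ext hi.symm rfl⟩
      simp [hne]
    · simpa [Function.comp_def, mul_comm] using h
  refine hgraph.prod_fiberwise fun i => ?_
  simpa only [mul_comm] using (hS i).mul_left (G i)

end CommSemiring

end HasFinsum

theorem finsum_ite_le {ι M : Type*} [Preorder ι] [LocallyFiniteOrderBot ι] [AddCommMonoid M]
    (b : ι) (f : ι → M) : ∑ᶠ j, (if j ≤ b then f j else 0) = ∑ j ∈ Finset.Iic b, f j := by
  rw [(HasFinsum.of_finset (Finset.Iic b) fun j hj => if_neg (Finset.mem_Iic.not.1 hj)).finsum_eq]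
  exact Finset.sum_congr rfl fun j hj => if_pos (Finset.mem_Iic.1 hj)

section Multi

variable {d : ℕ}

theorem inv_mfact_add_mul_mbinom (k j : Multi d) :
    1 / (mfact (k + j) : ℝ) * mbinom (k + j) j = 1 / mfact j * (1 / mfact k) := by
  have hchoose : mbinom (k + j) j * mfact k * mfact j = mfact (k + j) := by
    simp only [mbinom, mfact, ← Finset.prod_mul_distrib, Pi.add_apply]
    exact Finset.prod_congr rfl fun i _ => Nat.add_choose_mul_factorial_mul_factorial _ _
  have hne : ∀ i : Multi d, (mfact i : ℝ) ≠ 0 := fun i =>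
    Nat.cast_ne_zero.2 (Finset.prod_ne_zero_iff.2 fun j _ => (i j).factorial_ne_zero)
  have hcast : (mbinom (k + j) j : ℝ) * mfact k * mfact j = mfact (k + j) := mod_cast hchoose
  field_simp [hne k, hne j, hne (k + j)]
  linarith

theorem mbinom_eq_zero_of_not_le {k j : Multi d} (h : ¬ j ≤ k) : mbinom k j = 0 := by
  obtain ⟨i, hi⟩ := not_forall.1 h
  exact Finset.prod_eq_zero (Finset.mem_univ i) (Nat.choose_eq_zero_of_lt (not_le.1 hi))

end Multi

theorem forall_mem_iff_of_equiv {α : Type*} {bs bs' : List α} {r : α → α → Prop} {P : α → Prop}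
    (e : Fin bs.length ≃ Fin bs'.length) (he : ∀ i, r (bs.get i) (bs'.get (e i)))
    (hP : ∀ b b', r b b' → (P b ↔ P b')) : (∀ b ∈ bs, P b) ↔ ∀ b ∈ bs', P b := by
  simp only [List.forall_mem_iff_get]
  exact e.forall_congr fun {i} => hP _ _ (he i)

theorem set_ofFn {α : Type*} {n : ℕ} (f : Fin n → α) (i : Fin n) (y : α) :
    (List.ofFn f).set i y = List.ofFn (Function.update f i y) := by
  refine List.ext_getElem (by simp) fun j hj _ => ?_
  simp [List.getElem_set, Function.update_apply, Fin.ext_iff, eq_comm]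

theorem sum_fin_length_ofFn {α M : Type*} [AddCommMonoid M] {n : ℕ} (f : Fin n → α)
    (F : Fin (List.ofFn f).length → M) :
    ∑ i, F i = ∑ i : Fin n, F (Fin.cast List.length_ofFn.symm i) :=
  ((finCongr List.length_ofFn.symm).sum_comp F).symm

@[simp]
theorem qk_qout {d : ℕ} (c : QTree d) : qk (qout c) = c := (Quot.exists_rep c).choose_spec

namespace Tree

variable {d : ℕ} {aP aG aPr : Bool}

theorem ShapeN.mono {m n : ℕ} (hmn : m ≤ n) {t : Tree d} (h : ShapeN aP aG aPr m t) :
    ShapeN aP aG aPr n t := by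
  induction n generalizing m t with
  | zero => rwa [Nat.le_zero.1 hmn] at h
  | succ n ih =>
    cases t
    cases m with
    | zero => exact h.elim
    | succ m =>
      refine ⟨h.1, h.2.1, fun b hb => (h.2.2 b hb).imp_left ?_⟩
      rintro ⟨p, a, t, rfl, hp, ht⟩
      exact ⟨p, a, t, rfl, hp, ih (Nat.le_of_succ_le_succ hmn) ht⟩

theorem Shape.eventually {t : Tree d} (h : Shape aP aG aPr t) :
    ∀ᶠ n in Filter.atTop, ShapeN aP aG aPr n t := by
  obtain ⟨m, hm⟩ := h
  exact Filter.eventually_atTop.2 ⟨m, fun n hmn => hm.mono hmn⟩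

/-- The condition that `Shape` imposes on a branch, without fuel. -/
def BranchShape (aP aG aPr : Bool) : Branch d → Prop
  | Sum.inl ((p, _), t) => (aPr = true ∨ p = false) ∧ Shape aP aG aPr t
  | Sum.inr _ => aG = true

theorem shape_node_iff {l g v : Bool} {k : Multi d} {bs : List (Branch d)} :
    Shape aP aG aPr (.node l g k v bs) ↔
      (aG = true ∨ g = false) ∧ (aP = true ∨ k = 0) ∧ ∀ b ∈ bs, BranchShape aP aG aPr b := by
  constructor
  · rintro ⟨_ | n, h⟩
    · exact h.elim
    refine ⟨h.1, h.2.1, fun b hb => ?_⟩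
    rcases h.2.2 b hb with ⟨p, a, t, rfl, hp, ht⟩ | ⟨hG, x, rfl⟩
    · exact ⟨hp, n, ht⟩
    · exact hG
  · rintro ⟨hg, hk, hbs⟩
    have hfuel : ∀ᶠ n in Filter.atTop, ∀ b ∈ bs,
        (∃ p a t, b = Sum.inl ((p, a), t) ∧ (aPr = true ∨ p = false) ∧ ShapeN aP aG aPr n t) ∨
          (aG = true ∧ ∃ x, b = Sum.inr x) := by
      refine (Filter.eventually_all_finite bs.finite_toSet).2 fun b hb => ?_
      rcases b with ⟨⟨p, a⟩, t⟩ | x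
      · obtain ⟨hp, ht⟩ := hbs _ hb
        exact ht.eventually.mono fun n hn => Or.inl ⟨p, a, t, rfl, hp, hn⟩
      · exact Filter.Eventually.of_forall fun n => Or.inr ⟨hbs _ hb, x, rfl⟩
    obtain ⟨n, hn⟩ := hfuel.exists
    exact ⟨n + 1, hg, hk, hn⟩

theorem TEquivN.shape_iff {n : ℕ} {t t' : Tree d} (h : TEquivN n t t') :
    Shape aP aG aPr t ↔ Shape aP aG aPr t' := by
  induction n generalizing t t' with
  | zero => exact h.elim
  | succ n ih =>
    cases t
    cases t'
    obtain ⟨rfl, rfl, rfl, rfl, e, he⟩ := h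
    have hbranch : ∀ b b' : Branch d, BRel (TEquivN n) b b' →
        (BranchShape aP aG aPr b ↔ BranchShape aP aG aPr b') := by
      rintro (⟨⟨p, a⟩, t⟩ | x) (⟨⟨p', a'⟩, t'⟩ | x') hb
      · obtain ⟨rfl, rfl, ht⟩ := hb
        exact and_congr_right' (ih ht)
      · exact hb.elim
      · exact hb.elim
      · exact Iff.rfl
    simp only [shape_node_iff, forall_mem_iff_of_equiv e he hbranch]

theorem shape_congr {t t' : Tree d} (h : qk t = qk t') :
    Shape aP aG aPr t ↔ Shape aP aG aPr t' := by
  have hlift : ∀ t t' : Tree d, TEquiv t t' → Shape aP aG aPr t = Shape aP aG aPr t' :=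
    fun _ _ ⟨_, ht⟩ => propext ht.shape_iff
  exact iff_of_eq (congrArg (Quot.lift (Shape aP aG aPr) hlift) h)

/-- The tree `ζ_l X^k Y^𝔳 ∏ⱼ grayℐ_{bⱼ}(X^{kⱼ}) ∏ᵢ ℐ_{aᵢ}(τᵢ)`, where `grays` lists the pairs
`(bⱼ, kⱼ)`. -/
def branchNode {n : ℕ} (l : Bool) (k : Multi d) (v : Bool) (grays : List (Multi d × Multi d))
    (a : Fin n → Multi d) (τ : Fin n → Tree d) : Tree d :=
  .node l false k v ((grays.map fun x => grayB x.1 x.2) ++ List.ofFn fun i => intB (a i) (τ i))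

theorem shape_branchNode_iff {n : ℕ} {l v : Bool} {k : Multi d} {grays : List (Multi d × Multi d)}
    {a : Fin n → Multi d} {τ : Fin n → Tree d} :
    Shape aP aG aPr (branchNode l k v grays a τ) ↔
      (aP = true ∨ k = 0) ∧ (aG = true ∨ grays = []) ∧ ∀ i, Shape aP aG aPr (τ i) := by
  have hgrays : (∀ x ∈ grays, BranchShape aP aG aPr (grayB x.1 x.2)) ↔
      (aG = true ∨ grays = []) := by
    rcases grays with _ | ⟨x, grays⟩
    · simp
    · simpa [BranchShape, grayB] using fun h _ _ _ => h
  rw [branchNode, shape_node_iff, List.forall_mem_append, List.forall_mem_map, hgrays,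
    List.forall_mem_ofFn_iff]
  simp [BranchShape, intB]

@[elab_as_elim]
theorem IsT0.induction {motive : Tree d → Prop}
    (node : ∀ (n : ℕ) (l v : Bool) (a : Fin n → Multi d) (τ : Fin n → Tree d),
      (∀ i, IsT0 (τ i)) → (∀ i, motive (τ i)) → motive (branchNode l 0 v [] a τ))
    {t : Tree d} (ht : IsT0 t) : motive t := by
  obtain ⟨m, hm⟩ := ht
  induction m generalizing t with
  | zero => exact hm.elim
  | succ m ih =>
    obtain ⟨l, g, k, v, bs⟩ := t
    obtain ⟨hg, hk, hbs⟩ := hm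
    obtain rfl : g = false := by simpa using hg
    obtain rfl : k = 0 := by simpa using hk
    have hget : ∀ i : Fin bs.length, ∃ a t, bs.get i = intB a t ∧ ShapeN false false false m t := by
      intro i
      rcases hbs _ (bs.get_mem i) with ⟨p, a, t, hb, hp, ht⟩ | ⟨hG, -⟩
      · obtain rfl : p = false := by simpa using hp
        exact ⟨a, t, hb, ht⟩
      · cases hG
    choose a τ hbs_eq hτ using hget
    have hnode : Tree.node l false 0 v bs = branchNode l 0 v [] a τ := by
      simp only [branchNode, List.map_nil, List.nil_append, ← hbs_eq, List.ofFn_get]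
    exact hnode ▸ node _ l v a τ (fun i => ⟨m, hτ i⟩) fun i => ih (hτ i)

theorem IsT0.isT0g {t : Tree d} (ht : IsT0 t) : IsT0g t :=
  ht.induction fun _ _ _ _ _ _ ih => shape_branchNode_iff.2 ⟨Or.inr rfl, Or.inl rfl, ih⟩

/-- The exponent `k` of the monomial `X^k` at the root. -/
def rootDec : Tree d → Multi d
  | .node _ _ k _ _ => k

/-- The class of the subtree carried by an `ℐ`- or `ℐ'`-branch; grey leaves carry none. -/
def branchSubtree : Branch d → Option (QTree d)
  | Sum.inl (_, t) => some (qk t)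
  | Sum.inr _ => none

/-- The classes of the subtrees attached to the root by `ℐ`- and `ℐ'`-edges. -/
def rootSubtrees : Tree d → Set (QTree d)
  | .node _ _ _ _ bs => {c | ∃ b ∈ bs, branchSubtree b = some c}

theorem finite_rootSubtrees (t : Tree d) : t.rootSubtrees.Finite := by
  obtain ⟨l, g, k, v, bs⟩ := t
  exact (bs.filterMap branchSubtree).finite_toSet.subset fun c hc => List.mem_filterMap.2 hc

theorem TEquiv.rootDec_eq {t t' : Tree d} : TEquiv t t' → t.rootDec = t'.rootDec
  | ⟨0, h⟩ => h.elim
  | ⟨n + 1, h⟩ => by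
    cases t
    cases t'
    exact h.2.2.1

theorem TEquiv.rootSubtrees_eq {t t' : Tree d} : TEquiv t t' → t.rootSubtrees = t'.rootSubtrees
  | ⟨0, h⟩ => h.elim
  | ⟨n + 1, h⟩ => by
    cases t
    cases t'
    obtain ⟨-, -, -, -, e, he⟩ := h
    ext c
    have hbranch : ∀ b b' : Branch d, BRel (TEquivN n) b b' →
        (¬ branchSubtree b = some c ↔ ¬ branchSubtree b' = some c) := by
      rintro (⟨⟨p, a⟩, t⟩ | x) (⟨⟨p', a'⟩, t'⟩ | x') hb
      · have hclass : qk t = qk t' := Quot.sound ⟨n, hb.2.2⟩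
        simp only [branchSubtree, hclass]
      · exact hb.elim
      · exact hb.elim
      · exact Iff.rfl
    simpa only [rootSubtrees, Set.mem_ofPred_eq, not_forall, not_not, exists_prop] using
      not_congr (forall_mem_iff_of_equiv e he hbranch)

end Tree

namespace QTree

variable {d : ℕ}

/-- `Tree.rootDec` on non-planar trees. -/
def rootDec (x : QTree d) : Multi d := Quot.lift Tree.rootDec (fun _ _ => Tree.TEquiv.rootDec_eq) x

/-- `Tree.rootSubtrees` on non-planar trees. -/
def rootSubtrees (x : QTree d) : Set (QTree d) :=
  Quot.lift Tree.rootSubtrees (fun _ _ => Tree.TEquiv.rootSubtrees_eq) x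

theorem finite_rootSubtrees (x : QTree d) : (rootSubtrees x).Finite :=
  Quot.ind (β := fun x => (rootSubtrees x).Finite) Tree.finite_rootSubtrees x

@[simp]
theorem rootDec_branchNode {n : ℕ} (l : Bool) (k : Multi d) (v : Bool)
    (grays : List (Multi d × Multi d)) (a : Fin n → Multi d) (τ : Fin n → Tree d) :
    rootDec (qk (Tree.branchNode l k v grays a τ)) = k := rfl

theorem qk_mem_rootSubtrees_branchNode {n : ℕ} (l : Bool) (k : Multi d) (v : Bool)
    (grays : List (Multi d × Multi d)) (a : Fin n → Multi d) (τ : Fin n → Tree d) (i : Fin n) :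
    qk (τ i) ∈ rootSubtrees (qk (Tree.branchNode l k v grays a τ)) :=
  ⟨Tree.intB (a i) (τ i), List.mem_append_right _ (List.mem_ofFn.2 ⟨i, rfl⟩), rfl⟩

theorem finite_branchNode_fiber {n : ℕ} (l : Bool) (k : Multi d) (v : Bool)
    (grays : List (Multi d × Multi d)) (a : Fin n → Multi d) (x : QTree d) :
    {c : Fin n → QTree d | x = qk (Tree.branchNode l k v grays a fun i => qout (c i))}.Finite := by
  refine (Set.Finite.pi' fun _ : Fin n => finite_rootSubtrees x).subset ?_
  rintro c rfl i
  simpa using qk_mem_rootSubtrees_branchNode l k v grays a (fun i => qout (c i)) i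

end QTree

/-- `S` lies in the domain of the linear extension `extT G` and `T` is its image: every coefficient
of the image is a finite sum. -/
def HasExt {d : ℕ} (G : QTree d → Ser d) (S T : Ser d) : Prop :=
  ∀ x, HasFinsum (fun c => S c * G c x) (T x)

namespace HasExt

variable {d : ℕ} {G : QTree d → Ser d} {S S' T T' : Ser d}

theorem extT_eq (h : HasExt G S T) : extT G S = T := funext fun x => (h x).finsum_eq

theorem add (h : HasExt G S T) (h' : HasExt G S' T') : HasExt G (S + S') (T + T') := fun x => by
  simpa only [Pi.add_apply, add_mul] using (h x).add (h' x)

theorem finsetSum {κ : Type*} {A : Finset κ} {S T : κ → Ser d} (h : ∀ j ∈ A, HasExt G (S j) (T j)) :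
    HasExt G (∑ j ∈ A, S j) (∑ j ∈ A, T j) := fun x => by
  simpa only [Finset.sum_apply, Finset.sum_mul] using
    HasFinsum.finsetSum fun j hj => h j hj x

theorem smul (r : ℝ) (h : HasExt G S T) : HasExt G (r • S) (r • T) := fun x => by
  simpa only [Pi.smul_apply, smul_eq_mul, mul_assoc] using (h x).mul_left r

end HasExt

section Series

variable {d : ℕ}

theorem dqT_qout (c : QTree d) : dqT (qout c) = dqC c :=
  congrArg dqC (qk_qout c)

theorem hasExt_dqT (G : QTree d → Ser d) (t : Tree d) : HasExt G (dqT t) (G (qk t)) := fun x => by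
  simpa [dqT] using HasFinsum.single (f := fun c => dqT t c * G c x) (qk t)
    fun c hc => by simp [dqT, hc]

theorem hasExt_dqC (S : Ser d) : HasExt dqC S S := fun x => by
  simpa [dqC] using HasFinsum.single (f := fun c => S c * dqC c x) x
    fun c hc => by simp [dqC, hc.symm]

/-- The series all of whose trees satisfy `p`, tested on the representative `qout`. -/
def seriesOn (p : Tree d → Prop) : Submodule ℝ (Ser d) where
  carrier := {S | ∀ c, ¬ p (qout c) → S c = 0}
  add_mem' hS hT c hc := by simp [hS c hc, hT c hc]
  zero_mem' _ _ := rfl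
  smul_mem' r S hS c hc := by simp [hS c hc]

theorem prod_eq_zero_of_mem_seriesOn {n : ℕ} {p : Tree d → Prop} {S : Fin n → Ser d}
    (hS : ∀ i, S i ∈ seriesOn p) {c : Fin n → QTree d} (hc : ¬ ∀ i, p (qout (c i))) :
    ∏ i, S i (c i) = 0 := by
  obtain ⟨i, hi⟩ := not_forall.1 hc
  exact Finset.prod_eq_zero (Finset.mem_univ i) (hS i _ hi)

open Flow.Tree in
theorem dqT_mem_seriesOn_shape {aP aG aPr : Bool} {t : Tree d} (ht : Shape aP aG aPr t) :
    dqT t ∈ seriesOn (Shape aP aG aPr) := fun c hc => by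
  have hct : c ≠ qk t := by
    rintro rfl
    exact hc ((shape_congr (qk_qout _)).2 ht)
  simp [dqT, hct]

section NodeMul

variable {n : ℕ} (l : Bool) (k : Multi d) (v : Bool) (grays : List (Multi d × Multi d))
  (a : Fin n → Multi d)

/-- The families of subtrees `cᵢ` such that
`x = ζ_l X^k Y^𝔳 ∏ⱼ grayℐ_{bⱼ}(X^{kⱼ}) ∏ᵢ ℐ_{aᵢ}(cᵢ)`. -/
def branchFiber (x : QTree d) : Finset (Fin n → QTree d) :=
  (QTree.finite_branchNode_fiber l k v grays a x).toFinset

/-- The series `ζ_l X^k Y^𝔳 ∏ⱼ grayℐ_{bⱼ}(X^{kⱼ}) ∏ᵢ ℐ_{aᵢ}(Fᵢ)`, as a multilinear function of the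
series `Fᵢ`. -/
def nodeMul : MultilinearMap ℝ (fun _ : Fin n => Ser d) (Ser d) :=
  MultilinearMap.pi fun x =>
    ∑ c ∈ branchFiber l k v grays a x,
      (MultilinearMap.mkPiAlgebra ℝ (Fin n) ℝ).compLinearMap fun i => LinearMap.proj (c i)

/-- The series `Σ_k (X^k/k!) ζ_l Y^𝔳 ∏ⱼ grayℐ_{bⱼ}(X^{kⱼ}) ∏ᵢ ℐ_{aᵢ}(Fᵢ)`, as a multilinear function
of the series `Fᵢ`. Only the summand `k = x.rootDec` contributes to the coefficient of `x`. -/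
def locNode : MultilinearMap ℝ (fun _ : Fin n => Ser d) (Ser d) :=
  MultilinearMap.pi fun x =>
    (1 / (mfact (QTree.rootDec x) : ℝ)) •
      (LinearMap.proj x).compMultilinearMap (nodeMul l (QTree.rootDec x) v grays a)

variable {l k v grays a}

theorem mem_branchFiber {x : QTree d} {c : Fin n → QTree d} :
    c ∈ branchFiber l k v grays a x ↔
      x = qk (Tree.branchNode l k v grays a fun i => qout (c i)) :=
  Set.Finite.mem_toFinset _

theorem nodeMul_apply (F : Fin n → Ser d) (x : QTree d) :
    nodeMul l k v grays a F x =
      ∑ c ∈ branchFiber l k v grays a x, ∏ i, F i (c i) := by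
  simp [nodeMul]

theorem locNode_apply (F : Fin n → Ser d) (x : QTree d) :
    locNode l v grays a F x =
      1 / (mfact (QTree.rootDec x) : ℝ) * nodeMul l (QTree.rootDec x) v grays a F x := rfl

theorem nodeMul_apply_eq_zero (F : Fin n → Ser d) {x : QTree d} (hx : k ≠ QTree.rootDec x) :
    nodeMul l k v grays a F x = 0 := by
  rw [nodeMul_apply]
  refine Finset.sum_eq_zero fun c hc => (hx ?_).elim
  rw [mem_branchFiber.1 hc, QTree.rootDec_branchNode]

theorem hasFinsum_locNode (F : Fin n → Ser d) (x : QTree d) :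
    HasFinsum (fun k => 1 / (mfact k : ℝ) * nodeMul l k v grays a F x)
      (locNode l v grays a F x) :=
  HasFinsum.single _ fun k hk => by rw [nodeMul_apply_eq_zero F hk, mul_zero]

theorem nodeMul_dqC (c : Fin n → QTree d) :
    nodeMul l k v grays a (fun i => dqC (c i)) =
      dqT (Tree.branchNode l k v grays a fun i => qout (c i)) := by
  ext x
  have hprod : ∀ c' : Fin n → QTree d, ∏ i, dqC (c i) (c' i) = if c' = c then 1 else 0 := by
    intro c'
    simp only [dqC, Finset.prod_boole, funext_iff, Finset.mem_univ, true_imp_iff]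
  simp [nodeMul_apply, hprod, dqT, mem_branchFiber]

section Substitution

variable {G : Fin n → QTree d → Ser d} {S T : Fin n → Ser d}

theorem hasFinsum_nodeMul_comp (h : ∀ i, HasExt (G i) (S i) (T i)) (x : QTree d) :
    HasFinsum (fun c : Fin n → QTree d =>
        (∏ i, S i (c i)) * nodeMul l k v grays a (fun i => G i (c i)) x)
      (nodeMul l k v grays a T x) := by
  simp only [nodeMul_apply, Finset.mul_sum, ← Finset.prod_mul_distrib]
  exact HasFinsum.finsetSum fun c' _ => HasFinsum.piProd fun i => h i (c' i)

theorem hasFinsum_locNode_comp (h : ∀ i, HasExt (G i) (S i) (T i)) (x : QTree d) :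
    HasFinsum (fun p : Multi d × (Fin n → QTree d) =>
        (1 / (mfact p.1 : ℝ) * ∏ i, S i (p.2 i)) *
          nodeMul l p.1 v grays a (fun i => G i (p.2 i)) x)
      (locNode l v grays a T x) := by
  refine HasFinsum.of_injective (e := Prod.mk (QTree.rootDec x)) (Prod.mk_right_injective _) ?_ ?_
  · rintro ⟨k, c⟩ hkc
    have hk : k ≠ QTree.rootDec x := fun hk => hkc ⟨c, by rw [hk]⟩
    rw [nodeMul_apply_eq_zero _ hk, mul_zero]
  · simpa only [Function.comp_def, mul_assoc, locNode_apply] using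
      (hasFinsum_nodeMul_comp h x).mul_left (1 / (mfact (QTree.rootDec x) : ℝ))

end Substitution

section Pushforward

variable {G : QTree d → Ser d} {F : Fin n → Ser d} {T : Ser d}

theorem hasExt_nodeMul
    (h : ∀ x, HasFinsum (fun c : Fin n → QTree d => (∏ i, F i (c i)) *
      G (qk (Tree.branchNode l k v grays a fun i => qout (c i))) x) (T x)) :
    HasExt G (nodeMul l k v grays a F) T := fun x => by
  refine HasFinsum.of_pushforward (fun y => ?_) (h x)
  simpa only [nodeMul_dqC, dqT] using hasFinsum_nodeMul_comp (fun i => hasExt_dqC (F i)) y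

theorem hasExt_locNode
    (h : ∀ x, HasFinsum (fun p : Multi d × (Fin n → QTree d) =>
      (1 / (mfact p.1 : ℝ) * ∏ i, F i (p.2 i)) *
        G (qk (Tree.branchNode l p.1 v grays a fun i => qout (p.2 i))) x) (T x)) :
    HasExt G (locNode l v grays a F) T := fun x => by
  refine HasFinsum.of_pushforward (fun y => ?_) (h x)
  simpa only [nodeMul_dqC, dqT] using hasFinsum_locNode_comp (fun i => hasExt_dqC (F i)) y

end Pushforward

section Shape

open Flow.Tree

variable {aP aG aPr : Bool} {F : Fin n → Ser d}

theorem nodeMul_mem_seriesOn_shape (hk : aP = true ∨ k = 0) (hgrays : aG = true ∨ grays = [])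
    (hF : ∀ i, F i ∈ seriesOn (Shape aP aG aPr)) :
    nodeMul l k v grays a F ∈ seriesOn (Shape aP aG aPr) := fun x hx => by
  rw [nodeMul_apply]
  refine Finset.sum_eq_zero fun c hc => prod_eq_zero_of_mem_seriesOn hF fun hshape => hx ?_
  have hxc : qk (qout x) = qk (branchNode l k v grays a fun i => qout (c i)) :=
    (qk_qout x).trans (mem_branchFiber.1 hc)
  exact (shape_congr hxc).2 (shape_branchNode_iff.2 ⟨hk, hgrays, hshape⟩)

theorem locNode_mem_seriesOn_shape (hgrays : aG = true ∨ grays = [])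
    (hF : ∀ i, F i ∈ seriesOn (Shape true aG aPr)) :
    locNode l v grays a F ∈ seriesOn (Shape true aG aPr) := fun x hx => by
  rw [locNode_apply, nodeMul_mem_seriesOn_shape (Or.inl rfl) hgrays hF x hx, mul_zero]

end Shape

end NodeMul

/-- The summand of `nodeSer` at `cs`, for an arbitrary function `φ` of the list of branches. -/
def specTerm (φ : List (Branch d) → ℝ) (specs : List (BSpec d)) (cs : List (QTree d)) : ℝ :=
  if cs.length = specs.length then
    (List.zipWith BSpec.coeff specs cs).prod * φ (List.zipWith BSpec.toBranch specs cs)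
  else 0

theorem hasFinsum_specTerm_gray_cons {φ : List (Branch d) → ℝ} {specs : List (BSpec d)} {s : ℝ}
    (a k : Multi d) (h : HasFinsum (specTerm (fun bs => φ (Tree.grayB a k :: bs)) specs) s) :
    HasFinsum (specTerm φ (BSpec.gray a k :: specs)) s := by
  refine HasFinsum.of_injective (e := List.cons (qk (Tree.one false))) List.cons_injective ?_ ?_
  · rintro (_ | ⟨c, cs⟩) hcs
    · simp [specTerm]
    · have hc : c ≠ qk (Tree.one false) := fun hc => hcs ⟨cs, by rw [hc]⟩
      simp [specTerm, BSpec.coeff, hc]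
  · simpa [Function.comp_def, specTerm, BSpec.coeff, BSpec.toBranch] using! h

theorem hasFinsum_specTerm_grays_append {specs : List (BSpec d)} {s : ℝ}
    (grays : List (Multi d × Multi d)) {φ : List (Branch d) → ℝ}
    (h : HasFinsum
      (specTerm (fun bs => φ ((grays.map fun x => Tree.grayB x.1 x.2) ++ bs)) specs) s) :
    HasFinsum (specTerm φ ((grays.map fun x => BSpec.gray x.1 x.2) ++ specs)) s := by
  induction grays generalizing φ with
  | nil => exact h
  | cons x grays ih => exact hasFinsum_specTerm_gray_cons x.1 x.2 (ih h)

theorem hasFinsum_specTerm_ofFn_ser {n : ℕ} {φ : List (Branch d) → ℝ} {a : Fin n → Multi d}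
    {S : Fin n → Ser d} {s : ℝ}
    (h : HasFinsum (fun c : Fin n → QTree d =>
      (∏ i, S i (c i)) * φ (List.ofFn fun i => Tree.intB (a i) (qout (c i)))) s) :
    HasFinsum (specTerm φ (List.ofFn fun i => BSpec.ser false (a i) (S i))) s := by
  have zipWith_ofFn : ∀ {α β γ : Type} (f : α → β → γ) (p : Fin n → α) (q : Fin n → β),
      List.zipWith f (List.ofFn p) (List.ofFn q) = List.ofFn fun i => f (p i) (q i) :=
    fun f p q => List.ext_getElem (by simp) (by simp)
  refine HasFinsum.of_injective (e := List.ofFn (n := n)) List.ofFn_injective ?_ ?_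
  · intro cs hcs
    have hlen : cs.length ≠ n := by
      rintro rfl
      exact hcs ⟨cs.get, List.ofFn_get cs⟩
    simp [specTerm, hlen]
  · simpa [specTerm, Function.comp_def, zipWith_ofFn, List.prod_ofFn, BSpec.coeff,
      BSpec.toBranch, Tree.intB] using h

theorem nodeSer_eq_nodeMul {n : ℕ} (l : Bool) (k : Multi d) (v : Bool)
    (grays : List (Multi d × Multi d)) (a : Fin n → Multi d) (S : Fin n → Ser d) :
    nodeSer l false k v ((grays.map fun x => BSpec.gray x.1 x.2) ++
        List.ofFn fun i => BSpec.ser false (a i) (S i)) =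
      nodeMul l k v grays a S := by
  ext x
  refine HasFinsum.finsum_eq (f := specTerm (fun bs => dqT (.node l false k v bs) x) _)
    (hasFinsum_specTerm_grays_append grays (hasFinsum_specTerm_ofFn_ser ?_))
  simpa only [nodeMul_dqC] using! hasFinsum_nodeMul_comp (fun i => hasExt_dqC (S i)) x

theorem nodeSer_set_ofFn {n : ℕ} (l : Bool) (k : Multi d) (v : Bool) (a : Fin n → Multi d)
    (F : Fin n → Ser d) (i : Fin n) (S : Ser d) :
    nodeSer l false k v ((List.ofFn fun j => BSpec.ser false (a j) (F j)).set i
        (BSpec.ser false (a i) S)) =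
      nodeMul l k v [] a (Function.update F i S) := by
  have hupdate : Function.update (fun j => BSpec.ser false (a j) (F j)) i
      (BSpec.ser false (a i) S) =
      fun j => BSpec.ser false (a j) (Function.update F i S j) := by
    ext1 j
    rcases eq_or_ne j i with rfl | hj
    · simp
    · simp [hj]
  rw [set_ofFn, hupdate, ← nodeSer_eq_nodeMul]
  rfl

/-- The scalar `𝔳 ∈ {0, 1}` attached to a marker `Y^𝔳`. -/
def markerCoeff (v : Bool) : ℝ := if v = true then 1 else 0

section Recursions

variable {n : ℕ} {l v : Bool} {a : Fin n → Multi d} {τ : Fin n → Tree d}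

theorem MlocEqs.qk_branchNode {Mloc : QTree d → Ser d} (hMloc : MlocEqs Mloc)
    {grays : List (Multi d × Multi d)} (hτ : ∀ i, Tree.IsT0g (τ i)) :
    Mloc (qk (Tree.branchNode l 0 v grays a τ)) =
      locNode l v grays a fun i => Mloc (qk (τ i)) := by
  rw [Tree.branchNode, hMloc l false v _ (Tree.shape_branchNode_iff.2 ⟨.inr rfl, .inl rfl, hτ⟩)]
  ext x
  simp only [List.map_append, List.map_map, List.map_ofFn, Function.comp_def, Tree.grayB, Tree.intB,
    nodeSer_eq_nodeMul]
  exact (hasFinsum_locNode _ x).finsum_eq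

theorem GAEqs.qk_branchNode {GA : Multi d → QTree d → Ser d} (hGA : GAEqs GA) (b : Multi d)
    {k : Multi d} (hτ : ∀ i, Tree.IsT0X (τ i)) :
    GA b (qk (Tree.branchNode l k v [] a τ)) =
      markerCoeff v • ∑ j ∈ Finset.Iic b, (mbinom k j : ℝ) •
        dqT (Tree.branchNode l (k - j) v [(b - j, j)] a τ) +
      ∑ i, nodeMul l k v [] a (Function.update (fun j => dqT (τ j)) i (GA b (qk (τ i)))) := by
  have hnode : Tree.branchNode l k v [] a τ =
      Tree.mkX l k v (List.ofFn fun i => (a i, τ i)) := by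
    simp [Tree.branchNode, Tree.mkX, List.map_ofFn, Function.comp_def]
  rw [hnode, hGA b l k v _ (List.forall_mem_ofFn_iff.2 hτ)]
  congr 1
  · ext x
    simp [finsum_ite_le, markerCoeff, Tree.branchNode, List.map_ofFn, Function.comp_def]
  · simp [sum_fin_length_ofFn, specsOf, List.map_ofFn, Function.comp_def, nodeSer_set_ofFn]

theorem GAKEqs.qk_branchNode {GAK : Multi d → Multi d → QTree d → Ser d} (hGAK : GAKEqs GAK)
    (b k : Multi d) (hτ : ∀ i, Tree.IsT0g (τ i)) :
    GAK b k (qk (Tree.branchNode l 0 v [] a τ)) =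
      markerCoeff v • dqT (Tree.branchNode l 0 v [(b, k)] a τ) +
      ∑ i, nodeMul l 0 v [] a (Function.update (fun j => dqT (τ j)) i (GAK b k (qk (τ i)))) := by
  have hnode : Tree.branchNode l 0 v [] a τ =
      .node l false 0 v (List.ofFn fun i => Tree.intB (a i) (τ i)) := rfl
  have hshape : Tree.IsT0g (Tree.branchNode l 0 v [] a τ) :=
    Tree.shape_branchNode_iff.2 ⟨.inr rfl, .inl rfl, hτ⟩
  rw [hnode] at hshape ⊢
  rw [hGAK b k l false v _ hshape, sum_fin_length_ofFn]
  refine congrArg₂ _ rfl (Finset.sum_congr rfl fun i _ => ?_)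
  have hget : (List.ofFn fun i => Tree.intB (a i) (τ i)).get (Fin.cast List.length_ofFn.symm i) =
      Sum.inl ((false, a i), τ i) := List.get_ofFn _ _
  rw [hget, ← nodeSer_set_ofFn, specsOfB, List.map_ofFn]
  rfl

end Recursions

section Commutation

variable {Mloc : QTree d → Ser d} {GA : Multi d → QTree d → Ser d}
  {GAK : Multi d → Multi d → QTree d → Ser d} {n : ℕ} {l v : Bool} {a : Fin n → Multi d}

theorem MlocEqs.mem_seriesOn_isT0X (hMloc : MlocEqs Mloc) {t : Tree d} (ht : Tree.IsT0 t) :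
    Mloc (qk t) ∈ seriesOn Tree.IsT0X := by
  refine ht.induction fun n l v a τ hτ ih => ?_
  rw [hMloc.qk_branchNode fun i => (hτ i).isT0g]
  exact locNode_mem_seriesOn_shape (.inr rfl) ih

theorem HasExt.update {G : QTree d → Ser d} {S T : Fin n → Ser d} {i : Fin n} {U V : Ser d}
    (h : ∀ j, HasExt G (S j) (T j)) (hUV : HasExt G U V) (j : Fin n) :
    HasExt G (Function.update S i U j) (Function.update T i V j) := by
  rcases eq_or_ne j i with rfl | hj
  · simpa only [Function.update_self] using hUV
  · simpa only [Function.update_of_ne hj] using h j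

theorem GAKEqs.mem_seriesOn_isT0g (hGAK : GAKEqs GAK) (b k : Multi d) {t : Tree d}
    (ht : Tree.IsT0 t) : GAK b k (qk t) ∈ seriesOn Tree.IsT0g := by
  refine ht.induction fun n l v a τ hτ ih => ?_
  have hτg : ∀ i, Tree.IsT0g (τ i) := fun i => (hτ i).isT0g
  rw [hGAK.qk_branchNode b k hτg]
  refine add_mem (Submodule.smul_mem _ _ (dqT_mem_seriesOn_shape ?_)) (sum_mem fun i _ => ?_)
  · exact Tree.shape_branchNode_iff.2 ⟨.inr rfl, .inl rfl, hτg⟩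
  · exact nodeMul_mem_seriesOn_shape (.inr rfl) (.inl rfl)
      ((Function.forall_update_iff _ fun _ S => S ∈ seriesOn Tree.IsT0g).2
        ⟨ih i, fun j _ => dqT_mem_seriesOn_shape (hτg j)⟩)

theorem MlocEqs.hasExt_nodeMul (hMloc : MlocEqs Mloc) {grays : List (Multi d × Multi d)}
    {S T : Fin n → Ser d} (hS : ∀ i, S i ∈ seriesOn Tree.IsT0g)
    (hT : ∀ i, HasExt Mloc (S i) (T i)) :
    HasExt Mloc (nodeMul l 0 v grays a S) (locNode l v grays a T) := by
  refine Flow.hasExt_nodeMul fun x => ?_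
  have hterm : ∀ c : Fin n → QTree d,
      (∏ i, S i (c i)) * Mloc (qk (Tree.branchNode l 0 v grays a fun i => qout (c i))) x =
        1 / (mfact (QTree.rootDec x) : ℝ) * ((∏ i, S i (c i)) *
          nodeMul l (QTree.rootDec x) v grays a (fun i => Mloc (c i)) x) := by
    intro c
    by_cases hc : ∀ i, Tree.IsT0g (qout (c i))
    · simp only [hMloc.qk_branchNode hc, qk_qout, locNode_apply]
      ring
    · simp only [prod_eq_zero_of_mem_seriesOn hS hc, zero_mul, mul_zero]
  simp only [hterm, locNode_apply]
  exact (hasFinsum_nodeMul_comp hT x).mul_left _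

theorem hasExt_Mloc_GAK_branchNode (hMloc : MlocEqs Mloc) (hGAK : GAKEqs GAK) (b k : Multi d)
    {τ : Fin n → Tree d} (hτ : ∀ i, Tree.IsT0 (τ i)) {T : Fin n → Ser d}
    (hT : ∀ i, HasExt Mloc (GAK b k (qk (τ i))) (T i)) :
    HasExt Mloc (GAK b k (qk (Tree.branchNode l 0 v [] a τ)))
      (markerCoeff v • locNode l v [(b, k)] a (fun i => Mloc (qk (τ i))) +
        ∑ i, locNode l v [] a (Function.update (fun j => Mloc (qk (τ j))) i (T i))) := by
  have hτg : ∀ i, Tree.IsT0g (τ i) := fun i => (hτ i).isT0g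
  rw [hGAK.qk_branchNode b k hτg, ← hMloc.qk_branchNode hτg]
  refine ((hasExt_dqT Mloc _).smul _).add (HasExt.finsetSum fun i _ => ?_)
  exact hMloc.hasExt_nodeMul
    ((Function.forall_update_iff _ fun _ S => S ∈ seriesOn Tree.IsT0g).2
      ⟨hGAK.mem_seriesOn_isT0g b k (hτ i), fun j _ => dqT_mem_seriesOn_shape (hτg j)⟩)
    (HasExt.update (fun j => hasExt_dqT Mloc (τ j)) (hT i))

theorem hasExt_Mloc_GAK (hMloc : MlocEqs Mloc) (hGAK : GAKEqs GAK) (b k : Multi d)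
    {t : Tree d} (ht : Tree.IsT0 t) :
    HasExt Mloc (GAK b k (qk t)) (extT Mloc (GAK b k (qk t))) := by
  refine ht.induction fun n l v a τ hτ ih => ?_
  have hnode := hasExt_Mloc_GAK_branchNode (l := l) (v := v) (a := a) hMloc hGAK b k hτ ih
  rwa [hnode.extT_eq]

theorem hasFinsum_locNode_of_mbinom (grays : List (Multi d × Multi d)) (F : Fin n → Ser d)
    (j : Multi d) (x : QTree d) :
    HasFinsum (fun p : Multi d × (Fin n → QTree d) => (1 / (mfact p.1 : ℝ) * ∏ i, F i (p.2 i)) *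
        (mbinom p.1 j * dqT (Tree.branchNode l (p.1 - j) v grays a fun i => qout (p.2 i)) x))
      (1 / mfact j * locNode l v grays a F x) := by
  refine HasFinsum.of_injective
    (e := fun p : Multi d × (Fin n → QTree d) => (p.1 + j, p.2)) ?_ ?_ ?_
  · intro p q hpq
    simpa [Prod.ext_iff] using hpq
  · rintro ⟨k, c⟩ hkc
    have hjk : ¬ j ≤ k := fun hjk => hkc ⟨(k - j, c), by simp [tsub_add_cancel_of_le hjk]⟩
    simp only [mbinom_eq_zero_of_not_le hjk, Nat.cast_zero, zero_mul, mul_zero]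
  · have hweight : ∀ (k : Multi d) (r s : ℝ), 1 / (mfact (k + j) : ℝ) * r * (mbinom (k + j) j * s) =
        1 / mfact j * (1 / mfact k * r * s) := fun k r s => by
      linear_combination r * s * inv_mfact_add_mul_mbinom k j
    simpa only [Function.comp_def, hweight, add_tsub_cancel_right, nodeMul_dqC] using
      (hasFinsum_locNode_comp (l := l) (v := v) (grays := grays) (a := a)
        (fun i => hasExt_dqC (F i)) x).mul_left (1 / (mfact j : ℝ))

theorem GAEqs.qk_branchNode_qout (hGA : GAEqs GA) (b k : Multi d) {c : Fin n → QTree d}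
    (hc : ∀ i, Tree.IsT0X (qout (c i))) :
    GA b (qk (Tree.branchNode l k v [] a fun i => qout (c i))) =
      markerCoeff v • ∑ j ∈ Finset.Iic b, (mbinom k j : ℝ) •
        dqT (Tree.branchNode l (k - j) v [(b - j, j)] a fun i => qout (c i)) +
      ∑ i, nodeMul l k v [] a (fun j => Function.update (fun _ => dqC) i (GA b) j (c j)) := by
  have hupdate : ∀ i, (fun j => Function.update (fun _ => dqC) i (GA b) j (c j)) =
      Function.update (fun j => dqC (c j)) i (GA b (c i)) := fun i =>
    funext fun j => Function.apply_update (fun j (G : QTree d → Ser d) => G (c j)) _ i (GA b) j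
  simp only [hGA.qk_branchNode b hc, dqT_qout, qk_qout, hupdate]

theorem GAEqs.hasExt_locNode (hGA : GAEqs GA) (b : Multi d) {F T : Fin n → Ser d}
    (hF : ∀ i, F i ∈ seriesOn Tree.IsT0X) (hT : ∀ i, HasExt (GA b) (F i) (T i)) :
    HasExt (GA b) (locNode l v [] a F)
      (markerCoeff v • ∑ j ∈ Finset.Iic b, (1 / (mfact j : ℝ)) • locNode l v [(b - j, j)] a F +
        ∑ i, locNode l v [] a (Function.update F i (T i))) := by
  refine Flow.hasExt_locNode fun x => ?_
  have hterm : ∀ p : Multi d × (Fin n → QTree d),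
      (1 / (mfact p.1 : ℝ) * ∏ i, F i (p.2 i)) *
          GA b (qk (Tree.branchNode l p.1 v [] a fun i => qout (p.2 i))) x =
        markerCoeff v * ∑ j ∈ Finset.Iic b, (1 / (mfact p.1 : ℝ) * ∏ i, F i (p.2 i)) *
          (mbinom p.1 j *
            dqT (Tree.branchNode l (p.1 - j) v [(b - j, j)] a fun i => qout (p.2 i)) x) +
        ∑ i, (1 / (mfact p.1 : ℝ) * ∏ i, F i (p.2 i)) *
          nodeMul l p.1 v [] a
            (fun j => Function.update (fun _ => dqC) i (GA b) j (p.2 j)) x := by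
    intro p
    by_cases hp : ∀ i, Tree.IsT0X (qout (p.2 i))
    · simp only [hGA.qk_branchNode_qout b p.1 hp, Pi.add_apply, Pi.smul_apply, Finset.sum_apply,
        smul_eq_mul, ← Finset.mul_sum]
      ring
    · simp only [prod_eq_zero_of_mem_seriesOn hF hp, mul_zero, zero_mul, Finset.sum_const_zero,
        add_zero]
  have hgraft : ∀ i j, HasExt (Function.update (fun _ => dqC) i (GA b) j) (F j)
      (Function.update F i (T i) j) := by
    intro i j
    rcases eq_or_ne j i with rfl | hj
    · simpa only [Function.update_self] using hT j
    · simpa only [Function.update_of_ne hj] using hasExt_dqC (F j)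
  simp only [hterm, Pi.add_apply, Pi.smul_apply, Finset.sum_apply, smul_eq_mul]
  exact ((HasFinsum.finsetSum fun j _ => hasFinsum_locNode_of_mbinom _ F j x).mul_left _).add
    (HasFinsum.finsetSum fun i _ => hasFinsum_locNode_comp (hgraft i) x)

theorem hasExt_GA_Mloc (hMloc : MlocEqs Mloc) (hGA : GAEqs GA) (hGAK : GAKEqs GAK) (b : Multi d)
    {t : Tree d} (ht : Tree.IsT0 t) :
    HasExt (GA b) (Mloc (qk t))
      (∑ k ∈ Finset.Iic b, (1 / (mfact k : ℝ)) • extT Mloc (GAK (b - k) k (qk t))) := by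
  refine ht.induction fun n l v a τ hτ ih => ?_
  have hextT : ∀ k, extT Mloc (GAK (b - k) k (qk (Tree.branchNode l 0 v [] a τ))) = _ := fun k =>
    (hasExt_Mloc_GAK_branchNode hMloc hGAK (b - k) k hτ fun i =>
      hasExt_Mloc_GAK hMloc hGAK (b - k) k (hτ i)).extT_eq
  rw [hMloc.qk_branchNode fun i => (hτ i).isT0g]
  convert hGA.hasExt_locNode b (fun i => hMloc.mem_seriesOn_isT0X (hτ i)) ih using 1
  simp only [hextT, smul_add, Finset.sum_add_distrib, Finset.smul_sum,
    MultilinearMap.map_update_sum, MultilinearMap.map_update_smul, smul_comm (markerCoeff v)]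
  rw [Finset.sum_comm (s := Finset.univ)]

end Commutation

end Series

/-- Lemma `commutggraft`.  For every `a ∈ ℕ^{d+1}`, on `𝒯_0`
one has `gray↷_a ∘ M_loc = M_loc ∘ (Σ_{k} (1/k!) gray↷_{a−k,k})`, where the
terms with `a − k ∉ ℕ^{d+1}` (i.e. `k ≰ a`) are set to zero, and both sides
take values in the space of (possibly infinite) formal linear combinations of
decorated trees.  The maps `M_loc`, `gray↷_a`, `gray↷_{a,k}` are characterised
by their defining recursions `MlocEqs`, `GAEqs`, `GAKEqs`. -/
theorem gray_grafting_commutes_with_localisation {d : ℕ}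
    (Mloc : QTree d → Ser d) (GA : Multi d → QTree d → Ser d)
    (GAK : Multi d → Multi d → QTree d → Ser d)
    (hMloc : MlocEqs Mloc) (hGA : GAEqs GA) (hGAK : GAKEqs GAK) :
    ∀ (a : Multi d) (t : Tree d), Tree.IsT0 t →
      extT (GA a) (Mloc (qk t)) = fun x =>
        ∑ᶠ k : Multi d,
          if k ≤ a then (1 / (mfact k : ℝ)) * extT Mloc (GAK (a - k) k (qk t)) x
          else 0 := by
  intro a t ht
  rw [(hasExt_GA_Mloc hMloc hGA hGAK a ht).extT_eq]
  ext x
  simp only [finsum_ite_le, Finset.sum_apply, Pi.smul_apply, smul_eq_mul]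

end Flow
end
end

section
/- For every τ ∈ T_0 one can write ↑_μ τ = Σ_i (S(τ)/S(τ_i)) τ_i, where the τ_i are the pairwise distinct trees in T_1 of the form ↑_μ^e τ for e ∈ E_τ; equivalently, each distinct tree σ of the form ↑_μ^e τ occurs in ↑_μ τ with integer coefficient exactly S(τ)/S(σ). -/
noncomputable section
open scoped BigOperators
attribute [local instance] Classical.propDecidable

namespace Flow

/-!
Count the isomorphisms `σ ≅ τ` of decorated trees, with weight `k!` at each node: there are `S(τ)`
of them if `σ = τ` as non-planar trees, and none otherwise. Let `σ = ↑_μ^{e₀} τ`. Since `ℐ'`-edges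
go to `ℐ'`-edges, an isomorphism `↑_μ^e τ ≅ σ` is the same as an automorphism of `τ` sending `e` to
`e₀`. Summing over `e`, every automorphism of `τ` is counted exactly once, so
`#{e : ↑_μ^e τ = σ} · S(σ) = S(τ)`. Finally `↑_μ τ = ∑_e ↑_μ^e τ`, by induction on `τ`, so the
number of such `e` is the coefficient of `σ`.
-/

section Tuples

theorem tuple_induction_on_list {α : Type*} {P : ∀ n, (Fin n → α) → Prop}
    (get : ∀ bs : List α, P bs.length bs.get) {n : ℕ} (f : Fin n → α) : P n f :=
  (List.equivSigmaTuple.surjective.forall (p := fun x : Σ n, Fin n → α => P x.1 x.2)).2 get ⟨n, f⟩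

theorem ofFn_update {α : Type*} {n : ℕ} (f : Fin n → α) (i : Fin n) (b : α) :
    List.ofFn (Function.update f i b) = (List.ofFn f).set i b := by
  refine List.ext_getElem (by simp) fun j _ _ => ?_
  simp [List.getElem_set, Function.update_apply, Fin.ext_iff, eq_comm]

theorem prod_ite_eq_zero_or_prod {ι R : Type*} [Fintype ι] [CommMonoidWithZero R] (p : ι → Prop)
    [DecidablePred p] [Decidable (∀ i, p i)] (w : ι → R) :
    ∏ i, (if p i then w i else 0) = if ∀ i, p i then ∏ i, w i else 0 := by
  simpa using Finset.prod_ite_zero (s := Finset.univ) (p := p) (f := w)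

theorem sum_map_list_sum_comm {ι β R : Type*} [Fintype ι] [AddCommMonoid R] (L : List β)
    (w : β → ι → R) : (L.map fun b => ∑ e, w b e).sum = ∑ e, (L.map (w · e)).sum := by
  simpa using (Multiset.sum_map_sum_map (L : Multiset β) (Finset.univ : Finset ι).val (f := w))

/-
Only the summand `i = j` survives, because every other product contains the vanishing factor
`w (f j) y`.
-/
theorem sum_prod_update_eq_prod {ι α β R : Type*} [Fintype ι] [DecidableEq ι] [CommSemiring R]
    (w : α → β → R) (f : ι → α) (L : ι → List α) (g : ι → β) (j : ι) (y : β)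
    (w_eq_zero : w (f j) y = 0) (sum_w : ((L j).map (w · y)).sum = w (f j) (g j)) :
    ∑ i, ((L i).map fun b => ∏ x, w (Function.update f i b x) (Function.update g j y x)).sum =
      ∏ x, w (f x) (g x) := by
  rw [Finset.sum_eq_single_of_mem j (Finset.mem_univ j)]
  · simp_rw [Function.apply_update₂ (fun _ => w), Finset.prod_update_of_mem (Finset.mem_univ j)]
    rw [List.sum_map_mul_right, sum_w, Finset.sdiff_singleton_eq_erase,
      Finset.mul_prod_erase _ (fun x => w (f x) (g x)) (Finset.mem_univ j)]
  · intro i _ hij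
    refine List.sum_eq_zero fun r hr => ?_
    obtain ⟨b, _, rfl⟩ := List.mem_map.1 hr
    refine Finset.prod_eq_zero (Finset.mem_univ j) ?_
    rw [Function.update_self, Function.update_of_ne hij.symm, w_eq_zero]

theorem card_matchings_eq_card_perms {α ι κ : Type*} {r : α → α → Prop}
    (symm : ∀ {a b}, r a b → r b a) (trans : ∀ {a b c}, r a b → r b c → r a c)
    {f : ι → α} {g : κ → α} (e₀ : ι ≃ κ) (he₀ : ∀ i, r (f i) (g (e₀ i))) :
    Nat.card {e : ι ≃ κ // ∀ i, r (f i) (g (e i))} =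
      Nat.card {e : Equiv.Perm κ // ∀ i, r (g (e i)) (g i)} := by
  refine Nat.card_congr (Equiv.subtypeEquiv (Equiv.equivCongr e₀ (Equiv.refl κ)) fun e => ?_)
  rw [← e₀.forall_congr_right]
  refine forall_congr' fun i => ?_
  simp only [Equiv.equivCongr_apply_apply, Equiv.symm_apply_apply, Equiv.refl_apply]
  exact ⟨fun h => trans (symm h) (he₀ i), fun h => trans (he₀ i) (symm h)⟩

theorem finsum_eq_finsum_comp_of_support_subset_range {α β M : Type*} [AddCommMonoid M]
    {F : α → M} {g : β → α} (inj : Function.Injective g)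
    (hF : Function.support F ⊆ Set.range g) : ∑ᶠ a, F a = ∑ᶠ b, F (g b) := by
  rw [← finsum_mem_range inj, ← finsum_mem_univ, ← finsum_mem_inter_support F Set.univ,
    ← finsum_mem_inter_support F (Set.range g), Set.univ_inter, Set.inter_eq_right.2 hF]

end Tuples

namespace Tree

variable {d : ℕ} {l g l' g' v v' : Bool} {k k' : Multi d} {n m : ℕ}

/-- The tree whose branches at the root are the entries of the tuple `f`. Tuples rather than lists
let the matchings of the branches of two trees be indexed by `Fin n ≃ Fin m`. -/
def ofBranches (l g : Bool) (k : Multi d) (v : Bool) (f : Fin n → Branch d) : Tree d :=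
  .node l g k v (List.ofFn f)

theorem ofBranches_get (bs : List (Branch d)) : ofBranches l g k v bs.get = .node l g k v bs := by
  rw [ofBranches, List.ofFn_get]

theorem ofBranches_update_get (bs : List (Branch d)) (i : Fin bs.length) (b : Branch d) :
    ofBranches l g k v (Function.update bs.get i b) = .node l g k v (bs.set i b) := by
  rw [ofBranches, ofFn_update, List.ofFn_get]

theorem sizeOf_lt_of_mem_branches {bs : List (Branch d)} {pa : Bool × Multi d} {t : Tree d}
    (h : Sum.inl (pa, t) ∈ bs) : sizeOf t < sizeOf (Tree.node l g k v bs) := by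
  have := List.sizeOf_lt_of_mem h
  simp only [Sum.inl.sizeOf_spec, Prod.mk.sizeOf_spec, node.sizeOf_spec] at this ⊢
  omega

theorem ofBranches_induction {P : Tree d → Prop}
    (ofBranches : ∀ l g k v n (f : Fin n → Branch d),
      (∀ i pa t, f i = Sum.inl (pa, t) → P t) → P (ofBranches l g k v f)) (t : Tree d) : P t := by
  induction hs : sizeOf t using Nat.strong_induction_on generalizing t with
  | _ s ih =>
    obtain ⟨l, g, k, v, bs⟩ := t
    rw [← ofBranches_get]
    refine ofBranches l g k v _ _ fun i pa t hi => ih _ ?_ t rfl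
    exact hs ▸ sizeOf_lt_of_mem_branches (hi ▸ List.get_mem bs i)

section Equivalence

theorem BRel.mono {r r' : Tree d → Tree d → Prop} (h : ∀ s t, r s t → r' s t) :
    ∀ {b b' : Branch d}, BRel r b b' → BRel r' b b'
  | Sum.inl _, Sum.inl _, hb => ⟨hb.1, hb.2.1, h _ _ hb.2.2⟩
  | Sum.inr _, Sum.inr _, hb => hb

theorem BRel.refl_of_subtree {r : Tree d → Tree d → Prop} :
    ∀ {b : Branch d}, (∀ pa t, b = Sum.inl (pa, t) → r t t) → BRel r b b
  | Sum.inl (pa, t), h => ⟨rfl, rfl, h pa t rfl⟩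
  | Sum.inr _, _ => rfl

theorem BRel.symm {r : Tree d → Tree d → Prop} (h : ∀ {s t}, r s t → r t s) :
    ∀ {b b' : Branch d}, BRel r b b' → BRel r b' b
  | Sum.inl _, Sum.inl _, hb => ⟨hb.1.symm, hb.2.1.symm, h hb.2.2⟩
  | Sum.inr _, Sum.inr _, hb => Eq.symm hb

theorem BRel.trans {r : Tree d → Tree d → Prop} (h : ∀ {s t u}, r s t → r t u → r s u) :
    ∀ {b b' b'' : Branch d}, BRel r b b' → BRel r b' b'' → BRel r b b''
  | Sum.inl _, Sum.inl _, Sum.inl _, hb, hb' =>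
    ⟨hb.1.trans hb'.1, hb.2.1.trans hb'.2.1, h hb.2.2 hb'.2.2⟩
  | Sum.inr _, Sum.inr _, Sum.inr _, hb, hb' => Eq.trans hb hb'

theorem BRel.exists_TEquivN :
    ∀ {b b' : Branch d}, BRel TEquiv b b' → ∃ N, BRel (TEquivN N) b b'
  | Sum.inl _, Sum.inl _, hb => hb.2.2.imp fun _ hN => ⟨hb.1, hb.2.1, hN⟩
  | Sum.inr _, Sum.inr _, hb => ⟨0, hb⟩

theorem TEquivN.succ {N : ℕ} {s t : Tree d} (h : TEquivN N s t) : TEquivN (N + 1) s t := by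
  induction N generalizing s t with
  | zero => exact h.elim
  | succ N ih =>
    obtain ⟨l, g, k, v, bs⟩ := s
    obtain ⟨l', g', k', v', bs'⟩ := t
    obtain ⟨hl, hg, hk, hv, e, he⟩ := h
    exact ⟨hl, hg, hk, hv, e, fun i => (he i).mono fun _ _ => ih⟩

theorem TEquivN.mono {N M : ℕ} (hNM : N ≤ M) {s t : Tree d} (h : TEquivN N s t) :
    TEquivN M s t :=
  Nat.le_induction h (fun _ _ => TEquivN.succ) M hNM

theorem TEquivN.symm {N : ℕ} {s t : Tree d} (h : TEquivN N s t) : TEquivN N t s := by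
  induction N generalizing s t with
  | zero => exact h.elim
  | succ N ih =>
    obtain ⟨l, g, k, v, bs⟩ := s
    obtain ⟨l', g', k', v', bs'⟩ := t
    obtain ⟨hl, hg, hk, hv, e, he⟩ := h
    refine ⟨hl.symm, hg.symm, hk.symm, hv.symm, e.symm, fun i => BRel.symm ih ?_⟩
    simpa only [Equiv.apply_symm_apply] using he (e.symm i)

theorem TEquivN.trans {N : ℕ} {s t u : Tree d} (h : TEquivN N s t) (h' : TEquivN N t u) :
    TEquivN N s u := by
  induction N generalizing s t u with
  | zero => exact h.elim
  | succ N ih =>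
    obtain ⟨l, g, k, v, bs⟩ := s
    obtain ⟨l', g', k', v', bs'⟩ := t
    obtain ⟨l'', g'', k'', v'', bs''⟩ := u
    obtain ⟨hl, hg, hk, hv, e, he⟩ := h
    obtain ⟨hl', hg', hk', hv', e', he'⟩ := h'
    exact ⟨hl.trans hl', hg.trans hg', hk.trans hk', hv.trans hv', e.trans e',
      fun i => BRel.trans (r := TEquivN N) ih (he i) (he' (e i))⟩

theorem TEquiv_node_iff {bs bs' : List (Branch d)} :
    TEquiv (.node l g k v bs) (.node l' g' k' v' bs') ↔
      l = l' ∧ g = g' ∧ k = k' ∧ v = v' ∧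
        ∃ e : Fin bs.length ≃ Fin bs'.length, ∀ i, BRel TEquiv (bs.get i) (bs'.get (e i)) := by
  constructor
  · rintro ⟨_ | N, h⟩
    · exact h.elim
    · obtain ⟨hl, hg, hk, hv, e, he⟩ := h
      exact ⟨hl, hg, hk, hv, e, fun i => (he i).mono fun _ _ hN => ⟨N, hN⟩⟩
  · rintro ⟨hl, hg, hk, hv, e, he⟩
    choose N hN using fun i => (he i).exists_TEquivN
    exact ⟨Finset.univ.sup N + 1, hl, hg, hk, hv, e, fun i =>
      (hN i).mono fun _ _ => TEquivN.mono (Finset.le_sup (Finset.mem_univ i))⟩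

theorem TEquiv_ofBranches_iff {f : Fin n → Branch d} {f' : Fin m → Branch d} :
    TEquiv (ofBranches l g k v f) (ofBranches l' g' k' v' f') ↔
      (l = l' ∧ g = g' ∧ k = k' ∧ v = v') ∧
        ∃ e : Fin n ≃ Fin m, ∀ i, BRel TEquiv (f i) (f' (e i)) := by
  induction f using tuple_induction_on_list with | get bs
  induction f' using tuple_induction_on_list with | get bs'
  simp only [ofBranches_get, TEquiv_node_iff, and_assoc]

theorem TEquiv.refl (t : Tree d) : TEquiv t t := by
  induction t using ofBranches_induction with
  | ofBranches l g k v n f ih =>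
    exact TEquiv_ofBranches_iff.2
      ⟨⟨rfl, rfl, rfl, rfl⟩, Equiv.refl _, fun i => BRel.refl_of_subtree (ih i)⟩

theorem TEquiv.symm {s t : Tree d} (h : TEquiv s t) : TEquiv t s :=
  h.imp fun _ => TEquivN.symm

theorem TEquiv.trans {s t u : Tree d} : TEquiv s t → TEquiv t u → TEquiv s u
  | ⟨N, h⟩, ⟨M, h'⟩ => ⟨max N M, (h.mono (le_max_left N M)).trans (h'.mono (le_max_right N M))⟩

theorem qk_eq_qk_iff {s t : Tree d} : qk s = qk t ↔ TEquiv s t :=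
  Equivalence.quot_mk_eq_iff ⟨TEquiv.refl, TEquiv.symm, TEquiv.trans⟩ s t

theorem qk_qout (c : QTree d) : qk (qout c) = c := (Quot.exists_rep c).choose_spec

end Equivalence

section SymmetryFactor

/-- The contribution of a branch to the product over subtrees in the symmetry factor. -/
def branchSfac : Branch d → ℕ
  | Sum.inl (_, t) => Sfac t
  | Sum.inr _ => 1

theorem SfacN_eq_SfacN {N M : ℕ} {t : Tree d} (hN : sizeOf t ≤ N) (hM : sizeOf t ≤ M) :
    SfacN N t = SfacN M t := by
  induction N generalizing M t with
  | zero => cases t; simp at hN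
  | succ N ih =>
    obtain ⟨l, g, k, v, bs⟩ := t
    obtain _ | M := M
    · simp at hM
    rw [SfacN, SfacN]
    congr 2
    refine List.map_congr_left fun b hb => ?_
    rcases b with ⟨pa, t⟩ | _
    · have hlt := sizeOf_lt_of_mem_branches (l := l) (g := g) (k := k) (v := v) hb
      exact ih (Nat.le_of_lt_succ (hlt.trans_le hN)) (Nat.le_of_lt_succ (hlt.trans_le hM))
    · rfl

theorem Sfac_node (bs : List (Branch d)) :
    Sfac (.node l g k v bs) =
      mfact k *
        Nat.card {e : Equiv.Perm (Fin bs.length) // ∀ i, BRel TEquiv (bs.get (e i)) (bs.get i)} *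
        (bs.map branchSfac).prod := by
  rw [Sfac, SfacN_eq_SfacN le_rfl (Nat.le_succ _), SfacN]
  congr 2
  refine List.map_congr_left fun b hb => ?_
  rcases b with ⟨pa, t⟩ | _
  · exact SfacN_eq_SfacN (sizeOf_lt_of_mem_branches hb).le le_rfl
  · rfl

theorem Sfac_ofBranches (f : Fin n → Branch d) :
    Sfac (ofBranches l g k v f) =
      mfact k * Nat.card {e : Equiv.Perm (Fin n) // ∀ i, BRel TEquiv (f (e i)) (f i)} *
        ∏ i, branchSfac (f i) := by
  induction f using tuple_induction_on_list with | get bs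
  rw [ofBranches_get, Sfac_node, ← List.prod_ofFn]
  simp

theorem Sfac_pos (t : Tree d) : 0 < Sfac t := by
  induction t using ofBranches_induction with
  | ofBranches l g k v n f ih =>
    have mfact_pos : 0 < mfact k := Finset.prod_pos fun i _ => Nat.factorial_pos _
    have card_pos : 0 < Nat.card {e : Equiv.Perm (Fin n) // ∀ i, BRel TEquiv (f (e i)) (f i)} :=
      Nat.card_pos_iff.2
        ⟨⟨1, fun i => BRel.refl_of_subtree fun _ t _ => TEquiv.refl t⟩, inferInstance⟩
    have branchSfac_pos (i : Fin n) : 0 < branchSfac (f i) := by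
      rcases h : f i with ⟨pa, t⟩ | _
      · exact ih i pa t h
      · exact Nat.one_pos
    rw [Sfac_ofBranches]
    exact Nat.mul_pos (Nat.mul_pos mfact_pos card_pos) (Finset.prod_pos fun i _ => branchSfac_pos i)

end SymmetryFactor

section IsoCount

/-- The number of isomorphisms `s ≅ t` of decorated trees, counted with the weight `k!` at each
node: it is `S(t)` if `s` and `t` are isomorphic and `0` otherwise. -/
def isoCount (s t : Tree d) : ℕ := if TEquiv s t then Sfac t else 0

/-- The number of isomorphisms between two branches, weighted as in `isoCount`. -/
def branchIsoCount (b b' : Branch d) : ℕ := if BRel TEquiv b b' then branchSfac b' else 0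

theorem isoCount_self (t : Tree d) : isoCount t t = Sfac t := if_pos (TEquiv.refl t)

theorem sum_prod_branchIsoCount (f : Fin n → Branch d) (f' : Fin m → Branch d) :
    ∑ e : Fin n ≃ Fin m, ∏ i, branchIsoCount (f i) (f' (e i)) =
      Nat.card {e : Fin n ≃ Fin m // ∀ i, BRel TEquiv (f i) (f' (e i))} *
        ∏ j, branchSfac (f' j) := by
  simp_rw [branchIsoCount, prod_ite_eq_zero_or_prod,
    fun e : Fin n ≃ Fin m => e.prod_comp fun j => branchSfac (f' j)]
  rw [← Finset.sum_filter, Finset.sum_const, smul_eq_mul, ← Fintype.card_subtype,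
    ← Nat.card_eq_fintype_card]

theorem isoCount_ofBranches (f : Fin n → Branch d) (f' : Fin m → Branch d) :
    isoCount (ofBranches l g k v f) (ofBranches l' g' k' v' f') =
      (if l = l' ∧ g = g' ∧ k = k' ∧ v = v' then mfact k' else 0) *
        ∑ e : Fin n ≃ Fin m, ∏ i, branchIsoCount (f i) (f' (e i)) := by
  rw [sum_prod_branchIsoCount, isoCount, TEquiv_ofBranches_iff]
  by_cases same_root : l = l' ∧ g = g' ∧ k = k' ∧ v = v'
  · by_cases matching : ∃ e : Fin n ≃ Fin m, ∀ i, BRel TEquiv (f i) (f' (e i))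
    · obtain ⟨e₀, he₀⟩ := matching
      rw [if_pos ⟨same_root, e₀, he₀⟩, if_pos same_root, Sfac_ofBranches, mul_assoc,
        card_matchings_eq_card_perms (r := BRel TEquiv) (BRel.symm TEquiv.symm)
          (BRel.trans (r := TEquiv) TEquiv.trans) e₀ he₀]
    · have : IsEmpty {e : Fin n ≃ Fin m // ∀ i, BRel TEquiv (f i) (f' (e i))} :=
        ⟨fun e => matching ⟨e.1, e.2⟩⟩
      rw [if_neg fun h => matching h.2, Nat.card_of_isEmpty, zero_mul, mul_zero]
  · rw [if_neg fun h => same_root h.1, if_neg same_root, zero_mul]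

theorem branchIsoCount_intB_intB (a a' : Multi d) (s t : Tree d) :
    branchIsoCount (intB a s) (intB a' t) = if a = a' then isoCount s t else 0 := by
  simp only [branchIsoCount, isoCount, intB, BRel, branchSfac, true_and, ite_and]

theorem branchIsoCount_intPB_intPB (a a' : Multi d) (s t : Tree d) :
    branchIsoCount (intPB a s) (intPB a' t) = if a = a' then isoCount s t else 0 := by
  simp only [branchIsoCount, isoCount, intPB, BRel, branchSfac, true_and, ite_and]

theorem branchIsoCount_intB_intPB (a a' : Multi d) (s t : Tree d) :
    branchIsoCount (intB a s) (intPB a' t) = 0 := by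
  simp [branchIsoCount, intB, intPB, BRel]

theorem branchIsoCount_intPB_intB (a a' : Multi d) (s t : Tree d) :
    branchIsoCount (intPB a s) (intB a' t) = 0 := by
  simp [branchIsoCount, intB, intPB, BRel]

theorem branchIsoCount_inr_inl (x : Multi d × Multi d) (y : (Bool × Multi d) × Tree d) :
    branchIsoCount (Sum.inr x) (Sum.inl y) = 0 :=
  if_neg id

theorem sum_isoCount_eq_count_mul (L : List (Tree d)) (σ : Tree d) :
    (L.map (isoCount · σ)).sum = (L.map qk).count (qk σ) * Sfac σ := by
  induction L with
  | nil => simp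
  | cons s L ih =>
    rw [List.map_cons, List.sum_cons, ih, List.map_cons, List.count_cons, add_mul, add_comm]
    simp [isoCount, qk_eq_qk_iff]

end IsoCount

section Switches

/-- The branches obtained from a branch by switching one of its `ℐ`-edges to `ℐ'`, either the edge
at the bottom of the branch or an edge of its subtree. -/
def branchSwitches : Branch d → List (Branch d)
  | Sum.inl ((false, a), t) => intPB a t :: (switches t).map (intB a)
  | _ => []

theorem branchSwitches_intB (a : Multi d) (t : Tree d) :
    branchSwitches (intB a t) = intPB a t :: (switches t).map (intB a) := rfl

theorem switchesN_eq_switchesN {N M : ℕ} {t : Tree d} (hN : sizeOf t ≤ N) (hM : sizeOf t ≤ M) :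
    switchesN N t = switchesN M t := by
  induction N generalizing M t with
  | zero => cases t; simp at hN
  | succ N ih =>
    obtain ⟨l, g, k, v, bs⟩ := t
    obtain _ | M := M
    · simp at hM
    refine List.flatMap_congr fun i _ => ?_
    rcases hi : bs.get i with ⟨⟨_ | _, a⟩, t⟩ | _
    · have hlt := sizeOf_lt_of_mem_branches (l := l) (g := g) (k := k) (v := v)
        (hi ▸ List.get_mem bs i)
      simp only [ih (Nat.le_of_lt_succ (hlt.trans_le hN)) (Nat.le_of_lt_succ (hlt.trans_le hM))]
    all_goals rfl

theorem switches_node (bs : List (Branch d)) :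
    switches (.node l g k v bs) = (List.finRange bs.length).flatMap fun i =>
      (branchSwitches (bs.get i)).map fun b => .node l g k v (bs.set i b) := by
  rw [switches, switchesN_eq_switchesN le_rfl (Nat.le_succ _), switchesN]
  refine List.flatMap_congr fun i _ => ?_
  rcases hi : bs.get i with ⟨⟨_ | _, a⟩, t⟩ | _
  · have hle := (sizeOf_lt_of_mem_branches (l := l) (g := g) (k := k) (v := v)
      (hi ▸ List.get_mem bs i)).le
    simp only [branchSwitches, switches, switchesN_eq_switchesN hle le_rfl, List.map_cons,
      List.map_map, Function.comp_def]
  all_goals rfl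

theorem switches_ofBranches (f : Fin n → Branch d) :
    switches (ofBranches l g k v f) = (List.finRange n).flatMap fun i =>
      (branchSwitches (f i)).map fun b => ofBranches l g k v (Function.update f i b) := by
  induction f using tuple_induction_on_list with | get bs
  simp only [ofBranches_get, ofBranches_update_get, switches_node]

theorem exists_of_mem_switches_ofBranches {f : Fin n → Branch d} {σ : Tree d}
    (hσ : σ ∈ switches (ofBranches l g k v f)) :
    ∃ i, ∃ b ∈ branchSwitches (f i), σ = ofBranches l g k v (Function.update f i b) := by
  simpa only [switches_ofBranches, List.mem_flatMap, List.mem_finRange, true_and, List.mem_map,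
    eq_comm (b := σ)] using hσ

theorem exists_of_mem_branchSwitches {b b' : Branch d} (h : b' ∈ branchSwitches b) :
    ∃ a t, b = intB a t ∧ (b' = intPB a t ∨ ∃ σ ∈ switches t, b' = intB a σ) := by
  rcases b with ⟨⟨_ | _, a⟩, t⟩ | _
  · refine ⟨a, t, rfl, ?_⟩
    simpa only [branchSwitches, List.mem_cons, List.mem_map, eq_comm (b := b')] using h
  all_goals simp [branchSwitches] at h

theorem sum_map_switches_ofBranches {R : Type*} [AddCommMonoid R] (f : Fin n → Branch d)
    (F : Tree d → R) :
    ((switches (ofBranches l g k v f)).map F).sum =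
      ∑ i, ((branchSwitches (f i)).map fun b =>
        F (ofBranches l g k v (Function.update f i b))).sum := by
  rw [switches_ofBranches, List.map_flatMap, List.flatMap_def, List.sum_flatten, Fin.sum_univ_def]
  simp only [List.map_map, Function.comp_def]

end Switches

section Shape

variable {aP aG aPr aP' aG' : Bool}

theorem ShapeN.mono_s4 (hP : aP = true → aP' = true) (hG : aG = true → aG' = true) {N : ℕ}
    {t : Tree d} (h : ShapeN aP aG aPr N t) : ShapeN aP' aG' aPr N t := by
  induction N generalizing t with
  | zero => exact h
  | succ N ih =>
    obtain ⟨l, g, k, v, bs⟩ := t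
    obtain ⟨hg, hk, hbs⟩ := h
    refine ⟨hg.imp_left hG, hk.imp_left hP, fun b hb => (hbs b hb).imp ?_ (And.imp_left hG)⟩
    rintro ⟨p, a, t, rfl, hp, ht⟩
    exact ⟨p, a, t, rfl, hp, ih ht⟩

theorem IsT0.isT0Xg {t : Tree d} (h : IsT0 t) : IsT0Xg t :=
  h.imp fun _ => ShapeN.mono_s4 (fun _ => rfl) fun _ => rfl

theorem Shape.of_ofBranches {f : Fin n → Branch d} (h : Shape aP aG aPr (ofBranches l g k v f)) :
    (aG = true ∨ g = false) ∧ (aP = true ∨ k = 0) ∧ ∀ i,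
      (∃ p a t, f i = Sum.inl ((p, a), t) ∧ (aPr = true ∨ p = false) ∧ Shape aP aG aPr t) ∨
        (aG = true ∧ ∃ x, f i = Sum.inr x) := by
  obtain ⟨_ | N, h⟩ := h
  · exact h.elim
  obtain ⟨hg, hk, hf⟩ := h
  refine ⟨hg, hk, fun i => (hf (f i) (List.mem_ofFn.2 ⟨i, rfl⟩)).imp_left ?_⟩
  rintro ⟨p, a, t, hi, hp, ht⟩
  exact ⟨p, a, t, hi, hp, N, ht⟩

/-- The analogue of `IsT0Xg` for branches: no edge of the branch is an `ℐ'`-edge. -/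
def BranchIsT0Xg : Branch d → Prop
  | Sum.inl ((p, _), t) => p = false ∧ IsT0Xg t
  | Sum.inr _ => True

theorem IsT0.of_ofBranches {f : Fin n → Branch d} (h : IsT0 (ofBranches l g k v f)) :
    g = false ∧ k = 0 ∧ ∀ i, ∃ a t, f i = intB a t ∧ IsT0 t := by
  simpa [intB, IsT0] using Shape.of_ofBranches h

theorem IsT0Xg.branch {f : Fin n → Branch d} (h : IsT0Xg (ofBranches l g k v f)) (i : Fin n) :
    BranchIsT0Xg (f i) := by
  obtain ⟨p, a, t, hi, hp, ht⟩ | ⟨-, x, hx⟩ := (Shape.of_ofBranches h).2.2 i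
  · exact hi ▸ ⟨hp.resolve_left Bool.false_ne_true, ht⟩
  · exact hx ▸ trivial

end Shape

section DoubleCounting

theorem not_BRel_of_mem_branchSwitches {b b₀ b' : Branch d} (hb : BranchIsT0Xg b)
    (hb' : b' ∈ branchSwitches b₀)
    (subtree : ∀ pa t, b₀ = Sum.inl (pa, t) → ∀ s σ, IsT0Xg s → σ ∈ switches t → ¬ TEquiv s σ) :
    ¬ BRel TEquiv b b' := by
  obtain ⟨a₀, t₀, rfl, rfl | ⟨σ, hσ, rfl⟩⟩ := exists_of_mem_branchSwitches hb' <;>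
    rcases b with ⟨⟨p, a⟩, t⟩ | x
  · exact fun h => Bool.false_ne_true (hb.1.symm.trans h.1)
  · exact id
  · exact fun h => subtree _ _ rfl t σ hb.2 hσ h.2.2
  · exact id

theorem not_TEquiv_of_mem_switches {s t σ : Tree d} (hs : IsT0Xg s) (hσ : σ ∈ switches t) :
    ¬ TEquiv s σ := by
  induction t using ofBranches_induction generalizing s σ with
  | ofBranches l g k v n f ih =>
    obtain ⟨l', g', k', v', bs⟩ := s
    rw [← ofBranches_get] at hs ⊢
    obtain ⟨j, b, hb, rfl⟩ := exists_of_mem_switches_ofBranches hσ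
    rw [TEquiv_ofBranches_iff]
    rintro ⟨-, e, he⟩
    refine not_BRel_of_mem_branchSwitches (hs.branch (e.symm j)) hb
      (fun pa t hj _ _ => ih j pa t hj) ?_
    simpa only [Equiv.apply_symm_apply, Function.update_self] using he (e.symm j)

theorem branchIsoCount_eq_zero_of_mem_branchSwitches {b b₀ b' : Branch d} (hb : BranchIsT0Xg b)
    (hb' : b' ∈ branchSwitches b₀) : branchIsoCount b b' = 0 :=
  if_neg (not_BRel_of_mem_branchSwitches hb hb' fun _ _ _ _ _ => not_TEquiv_of_mem_switches)

theorem sum_branchIsoCount_branchSwitches {b b₀ b' : Branch d} (hb : BranchIsT0Xg b)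
    (hb' : b' ∈ branchSwitches b₀)
    (subtree : ∀ pa t, b₀ = Sum.inl (pa, t) → ∀ s σ, IsT0Xg s → σ ∈ switches t →
      ((switches s).map (isoCount · σ)).sum = isoCount s t) :
    ((branchSwitches b).map (branchIsoCount · b')).sum = branchIsoCount b b₀ := by
  obtain ⟨a₀, t₀, rfl, h⟩ := exists_of_mem_branchSwitches hb'
  rcases b with ⟨⟨p, a⟩, t⟩ | x
  · obtain ⟨rfl, ht⟩ := hb
    change ((branchSwitches (intB a t)).map _).sum = branchIsoCount (intB a t) _
    rw [branchSwitches_intB, List.map_cons, List.sum_cons, List.map_map, branchIsoCount_intB_intB]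
    obtain rfl | ⟨σ, hσ, rfl⟩ := h
    · simp [Function.comp_def, branchIsoCount_intPB_intPB, branchIsoCount_intB_intPB]
    · simp only [Function.comp_def, branchIsoCount_intPB_intB, branchIsoCount_intB_intB, zero_add]
      split_ifs
      · exact subtree _ _ rfl t σ ht hσ
      · simp
  · exact (branchIsoCount_inr_inl x _).symm

theorem sum_isoCount_switches {s t σ : Tree d} (hs : IsT0Xg s) (hσ : σ ∈ switches t) :
    ((switches s).map (isoCount · σ)).sum = isoCount s t := by
  induction t using ofBranches_induction generalizing s σ with
  | ofBranches l₀ g₀ k₀ v₀ m f₀ ih =>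
    obtain ⟨l, g, k, v, bs⟩ := s
    rw [← ofBranches_get] at hs ⊢
    generalize bs.get = f at hs ⊢
    obtain ⟨j, b', hb', rfl⟩ := exists_of_mem_switches_ofBranches hσ
    simp only [sum_map_switches_ofBranches, isoCount_ofBranches, List.sum_map_mul_left,
      sum_map_list_sum_comm, ← Finset.mul_sum]
    rw [Finset.sum_comm]
    congr 1
    refine Finset.sum_congr rfl fun e _ => ?_
    have reindex (x) : Function.update f₀ j b' (e x) =
        Function.update (f₀ ∘ e) (e.symm j) b' x :=
      congrFun (Function.update_comp_equiv f₀ e j b') x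
    have apply_symm : (f₀ ∘ e) (e.symm j) = f₀ j := congrArg f₀ (e.apply_symm_apply j)
    simp only [reindex]
    refine sum_prod_update_eq_prod branchIsoCount f (fun i => branchSwitches (f i)) (f₀ ∘ e)
      (e.symm j) b' (branchIsoCount_eq_zero_of_mem_branchSwitches (hs.branch _) hb') ?_
    rw [apply_symm]
    exact sum_branchIsoCount_branchSwitches (hs.branch _) hb' fun pa t hj _ _ => ih j pa t hj

theorem count_map_qk_switches_mul_Sfac {t σ : Tree d} (ht : IsT0Xg t) (hσ : σ ∈ switches t) :
    ((switches t).map qk).count (qk σ) * Sfac σ = Sfac t := by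
  rw [← sum_isoCount_eq_count_mul, sum_isoCount_switches ht hσ, isoCount_self]

end DoubleCounting

section AbstractDerivative

theorem sum_map_dqT_apply (L : List (Tree d)) (c : QTree d) :
    (L.map dqT).sum c = ((L.map qk).count c : ℝ) := by
  induction L with
  | nil => simp
  | cons t L ih =>
    rw [List.map_cons, List.sum_cons, Pi.add_apply, ih, List.map_cons, List.count_cons, add_comm]
    simp [dqT, eq_comm (a := c)]

theorem finsum_sum_map_dqT_mul (L : List (Tree d)) (F : QTree d → ℝ) :
    ∑ᶠ c, (L.map dqT).sum c * F c = (L.map fun t => F (qk t)).sum := by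
  simp_rw [sum_map_dqT_apply]
  rw [finsum_eq_sum_of_support_subset (s := (L.map qk).toFinset)]
  · simpa only [List.map_map, nsmul_eq_mul, Function.comp_def] using
      (Finset.sum_list_map_count (L.map qk) F).symm
  · intro c hc
    have count_ne_zero := Nat.cast_ne_zero.1 (left_ne_zero_of_mul hc)
    exact List.mem_toFinset.2 (List.count_pos_iff.1 (Nat.pos_of_ne_zero count_ne_zero))

theorem nodeSer_ofFn (spec : Fin n → BSpec d) (x : QTree d) :
    nodeSer l g k v (List.ofFn spec) x = ∑ᶠ c : Fin n → QTree d,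
      (∏ i, (spec i).coeff (c i)) *
        dqT (ofBranches l g k v fun i => (spec i).toBranch (c i)) x := by
  have zipWith_ofFn {α : Type} (F : BSpec d → QTree d → α) (c : Fin n → QTree d) :
      List.zipWith F (List.ofFn spec) (List.ofFn c) = List.ofFn fun i => F (spec i) (c i) :=
    List.ext_getElem (by simp) fun _ _ _ => by simp
  rw [nodeSer, finsum_eq_finsum_comp_of_support_subset_range List.ofFn_injective]
  · refine finsum_congr fun c => ?_
    rw [if_pos (by simp), zipWith_ofFn, zipWith_ofFn, List.prod_ofFn, ofBranches]
  · intro cs hcs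
    obtain rfl : cs.length = n := by
      by_contra hlen
      exact hcs (if_neg (by simpa using hlen))
    exact ⟨cs.get, List.ofFn_get cs⟩

theorem dqT_ofBranches_congr {pa : Fin n → Bool × Multi d} {s t : Fin n → Tree d}
    (h : ∀ i, qk (s i) = qk (t i)) :
    dqT (ofBranches l g k v fun i => Sum.inl (pa i, s i)) =
      dqT (ofBranches l g k v fun i => Sum.inl (pa i, t i)) := by
  have equiv : TEquiv (ofBranches l g k v fun i => Sum.inl (pa i, s i))
      (ofBranches l g k v fun i => Sum.inl (pa i, t i)) :=
    TEquiv_ofBranches_iff.2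
      ⟨⟨rfl, rfl, rfl, rfl⟩, Equiv.refl _, fun i => ⟨rfl, rfl, qk_eq_qk_iff.1 (h i)⟩⟩
  exact funext fun x => by rw [dqT, dqT, qk_eq_qk_iff.2 equiv]

theorem nodeSer_update (p : Fin n → Bool) (a : Fin n → Multi d) (t : Fin n → Tree d) (i : Fin n)
    (A : Ser d) (x : QTree d) :
    nodeSer l g k v
        (List.ofFn fun j => .ser (p j) (a j) (Function.update (fun j => dqT (t j)) i A j)) x =
      ∑ᶠ c, A c *
        dqT (ofBranches l g k v fun j =>
          Sum.inl ((p j, a j), Function.update t i (qout c) j)) x := by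
  rw [nodeSer_ofFn, finsum_eq_finsum_comp_of_support_subset_range
    (Function.update_injective (fun j => qk (t j)) i)]
  · refine finsum_congr fun c => ?_
    congr 1
    · simp only [BSpec.coeff]
      rw [Finset.prod_eq_single_of_mem i (Finset.mem_univ i)]
      · simp
      · intro j _ hj
        simp [hj, dqT]
    · refine congrFun (dqT_ofBranches_congr fun j => ?_) x
      rw [qk_qout, Function.apply_update (fun _ => qk), qk_qout]
  · intro c hc
    refine ⟨c i, (Function.eq_update_iff.2 ⟨rfl, fun j hj => ?_⟩).symm⟩
    have := Finset.prod_ne_zero_iff.1 (left_ne_zero_of_mul hc) j (Finset.mem_univ j)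
    simpa [BSpec.coeff, hj, dqT] using this

theorem nodeSer_update_sum_map_dqT (p : Fin n → Bool) (a : Fin n → Multi d) (t : Fin n → Tree d)
    (i : Fin n) (L : List (Tree d)) :
    nodeSer l g k v (List.ofFn fun j =>
        .ser (p j) (a j) (Function.update (fun j => dqT (t j)) i (L.map dqT).sum j)) =
      (L.map fun s =>
        dqT (ofBranches l g k v fun j => Sum.inl ((p j, a j), Function.update t i s j))).sum := by
  funext x
  rw [nodeSer_update, finsum_sum_map_dqT_mul, Pi.list_sum_apply, List.map_map]
  refine congrArg List.sum (List.map_congr_left fun s _ => ?_)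
  refine congrFun (dqT_ofBranches_congr fun j => ?_) x
  simp only [Function.apply_update (fun _ => qk), qk_qout]

theorem up_ofBranches {up : QTree d → Ser d} (hup : UpEqs up) (a : Fin n → Multi d)
    (t : Fin n → Tree d) (ht : ∀ i, IsT0 (t i)) :
    up (qk (ofBranches l false 0 v fun i => intB (a i) (t i))) = ∑ i,
      (dqT (ofBranches l false 0 v
          (Function.update (fun j => intB (a j) (t j)) i (intPB (a i) (t i)))) +
        nodeSer l false 0 v (List.ofFn fun j =>
          .ser false (a j) (Function.update (fun j => dqT (t j)) i (up (qk (t i))) j))) := by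
  obtain ⟨p, rfl, rfl⟩ : ∃ p : Fin n → Multi d × Tree d, (fun i => (p i).1) = a ∧
      (fun i => (p i).2) = t := ⟨fun i => (a i, t i), rfl, rfl⟩
  induction p using tuple_induction_on_list with | get bs
  have ofFn_comp_get {α : Type} (F : Multi d × Tree d → α) :
      (List.ofFn fun i => F (bs.get i)) = bs.map F := by
    simp
  have specs (i : Fin bs.length) (A : Ser d) :
      (List.ofFn fun j =>
        BSpec.ser false (bs.get j).1 (Function.update (fun j => dqT (bs.get j).2) i A j)) =
      (specsOf bs).set i (.ser false (bs.get i).1 A) := by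
    rw [specsOf, ← ofFn_comp_get, ← ofFn_update]
    exact congrArg List.ofFn
      (funext (Function.apply_update (fun j => BSpec.ser false (bs.get j).1) _ i A))
  simp only [Finset.sum_add_distrib, specs, ofBranches, ofFn_update,
    ofFn_comp_get fun p => intB p.1 p.2]
  exact hup l v bs (List.forall_mem_iff_get.2 ht)

theorem up_eq_sum_switches {up : QTree d → Ser d} (hup : UpEqs up) {t : Tree d} (ht : IsT0 t) :
    up (qk t) = ((switches t).map dqT).sum := by
  induction t using ofBranches_induction with
  | ofBranches l g k v n f ih =>
    obtain ⟨rfl, rfl, hf⟩ := ht.of_ofBranches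
    choose a t hft ht' using hf
    obtain rfl : f = fun i => intB (a i) (t i) := funext hft
    rw [up_ofBranches hup a t ht', sum_map_switches_ofBranches]
    refine Finset.sum_congr rfl fun i _ => ?_
    rw [branchSwitches_intB, List.map_cons, List.sum_cons, List.map_map, ih i _ _ rfl (ht' i),
      nodeSer_update_sum_map_dqT]
    refine congrArg (_ + List.sum ·) (List.map_congr_left fun s _ => congrArg dqT ?_)
    exact congrArg (ofBranches l false 0 v)
      (funext (Function.apply_update (fun j => intB (a j)) t i s))

end AbstractDerivative

end Tree

/-- For every `τ ∈ T_0` one has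
`↑_μ τ = Σ_i (S(τ)/S(τ_i)) τ_i`, where the `τ_i` are the pairwise distinct
(non-planar) trees of the form `↑_μ^e τ`, `e ∈ E_τ`: equivalently, every
distinct tree `σ` of the form `↑_μ^e τ` occurs in `↑_μ τ` with integer
coefficient exactly `S(τ)/S(σ)`, and no other tree occurs. -/
theorem abstract_derivative_coefficients {d : ℕ}
    (up : QTree d → Ser d) (hup : UpEqs up) :
    ∀ t : Tree d, Tree.IsT0 t →
      (∀ σ ∈ Tree.switches t,
        Tree.Sfac σ ∣ Tree.Sfac t ∧
          up (qk t) (qk σ) = (Tree.Sfac t : ℝ) / (Tree.Sfac σ : ℝ)) ∧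
      (∀ c : QTree d, (∀ σ ∈ Tree.switches t, qk σ ≠ c) → up (qk t) c = 0) := by
  intro t ht
  have coeff_eq_count (c : QTree d) : up (qk t) c = ((t.switches.map qk).count c : ℝ) := by
    rw [Tree.up_eq_sum_switches hup ht, Tree.sum_map_dqT_apply]
  refine ⟨fun σ hσ => ?_, fun c hc => ?_⟩
  · have count_mul := Tree.count_map_qk_switches_mul_Sfac ht.isT0Xg hσ
    have Sfac_ne_zero : (Tree.Sfac σ : ℝ) ≠ 0 := Nat.cast_ne_zero.2 (Tree.Sfac_pos σ).ne'
    refine ⟨Dvd.intro_left _ count_mul, ?_⟩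
    rw [coeff_eq_count, eq_div_iff Sfac_ne_zero]
    exact_mod_cast count_mul
  · rw [coeff_eq_count, List.count_eq_zero.2 (by simpa using hc), Nat.cast_zero]

end Flow
end
end
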